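/- arXiv:1308.6693 — 2 statements merged into one kernel-verified Lean document; each statement's English description precedes it below -/
import Mathlib

section
/- Let Γ be a y-monotone poly-line drawing, with b bends in total, of a connected finite simple planar graph G with n vertices and m edges. Then G has a flat visibility representation with the same y-coordinates as Γ (in particular of the same height as Γ) and width at most max{n + b, m + b}. -/
open Set

/-- A point in the plane. -/
abbrev Pt : Type := ℝ × ℝ

/-- A point has integer coordinates. -/
def IsIntPt (p : Pt) : Prop := (∃ a : ℤ, p.1 = (a : ℝ)) ∧ (∃ b : ℤ, p.2 = (b : ℝ))

/-- The (closed) segments of a polygonal chain, as pairs of consecutive corners. -/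
def chainSegs (l : List Pt) : List (Pt × Pt) := l.zip l.tail

/-- The set of points covered by a polygonal chain. -/
def chainSet (l : List Pt) : Set Pt := ⋃ s ∈ chainSegs l, segment ℝ s.1 s.2

/-- A polygonal chain is simple (non-self-intersecting): it has at least two
corners, all corners are distinct, and two of its segments meet only if they are
consecutive, and then only in their shared corner. -/
def IsSimpleChain (l : List Pt) : Prop :=
  2 ≤ l.length ∧ l.Nodup ∧
    ∀ i j : ℕ, i < j → ∀ (hi : i < (chainSegs l).length) (hj : j < (chainSegs l).length),
      segment ℝ ((chainSegs l).get ⟨i, hi⟩).1 ((chainSegs l).get ⟨i, hi⟩).2 ∩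
        segment ℝ ((chainSegs l).get ⟨j, hj⟩).1 ((chainSegs l).get ⟨j, hj⟩).2 ⊆
        if j = i + 1 then {((chainSegs l).get ⟨j, hj⟩).1} else (∅ : Set Pt)

/-- Every interior corner of the chain is a genuine bend (a direction change). -/
def GenuineBends (l : List Pt) : Prop :=
  ∀ i : ℕ, ∀ h : i + 2 < l.length,
    ¬ Collinear ℝ ({l.get ⟨i, by omega⟩, l.get ⟨i + 1, by omega⟩, l.get ⟨i + 2, h⟩} : Set Pt)

/-- The chain is a y-monotone path (horizontal segments allowed). -/
def IsMonoChain (l : List Pt) : Prop :=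
  (l.map Prod.snd).Chain' (· ≤ ·) ∨ (l.map Prod.snd).Chain' (fun a b => b ≤ a)

/-- All segments of the chain are horizontal or vertical. -/
def IsOrthoChain (l : List Pt) : Prop :=
  ∀ s ∈ chainSegs l, s.1.1 = s.2.1 ∨ s.1.2 = s.2.2

/-- A poly-line drawing of a graph `G`: every vertex is a point, and every edge
`uv` is the polygonal chain through the list `bends u v` of bend points
(listed in order from `u` to `v`). -/
structure PolylineDrawing {V : Type*} (G : SimpleGraph V) where
  pos : V → Pt
  bends : V → V → List Pt
  bends_symm : ∀ u v, bends v u = (bends u v).reverse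

namespace PolylineDrawing

variable {V : Type*} {G : SimpleGraph V}

/-- The corner list of the curve of edge `uv`. -/
def chain (D : PolylineDrawing G) (u v : V) : List Pt :=
  D.pos u :: (D.bends u v ++ [D.pos v])

/-- The set of points of the curve of edge `uv`. -/
def curve (D : PolylineDrawing G) (u v : V) : Set Pt := chainSet (D.chain u v)

/-- The defining elements of the drawing: vertex points and bends. -/
def points (D : PolylineDrawing G) : Set Pt :=
  Set.range D.pos ∪ ⋃ (u) (v) (_ : G.Adj u v), {p | p ∈ D.bends u v}

/-- The drawing is planar: vertex points are pairwise distinct, every edge curve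
is a simple chain whose interior corners are genuine bends, an edge curve contains
no vertex point other than its endpoints, and two distinct edge curves intersect
only in points of common endpoints. -/
def IsPlanar (D : PolylineDrawing G) : Prop :=
  Function.Injective D.pos ∧
  (∀ u v, G.Adj u v → IsSimpleChain (D.chain u v) ∧ GenuineBends (D.chain u v)) ∧
  (∀ u v w, G.Adj u v → w ≠ u → w ≠ v → D.pos w ∉ D.curve u v) ∧
  (∀ u v x y, G.Adj u v → G.Adj x y → s(u, v) ≠ s(x, y) →
    D.curve u v ∩ D.curve x y ⊆ D.pos '' (({u, v} : Set V) ∩ ({x, y} : Set V)))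

/-- All defining elements have integer coordinates. -/
def IntCoords (D : PolylineDrawing G) : Prop := ∀ p ∈ D.points, IsIntPt p

/-- A straight-line drawing: no edge has bends. -/
def IsStraightLine (D : PolylineDrawing G) : Prop := ∀ u v : V, D.bends u v = []

/-- Every edge curve is a y-monotone path. -/
def IsYMonotone (D : PolylineDrawing G) : Prop :=
  ∀ u v, G.Adj u v → IsMonoChain (D.chain u v)

/-- The drawing fits (after translation) in the rows `1, …, h`. -/
def InHeight (D : PolylineDrawing G) (h : ℕ) : Prop :=
  ∃ y0 : ℤ, ∀ p ∈ D.points, (y0 : ℝ) ≤ p.2 ∧ p.2 ≤ (y0 : ℝ) + (h : ℝ) - 1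

/-- The drawing fits (after translation) in the columns `1, …, w`. -/
def InWidth (D : PolylineDrawing G) (w : ℕ) : Prop :=
  ∃ x0 : ℤ, ∀ p ∈ D.points, (x0 : ℝ) ≤ p.1 ∧ p.1 ≤ (x0 : ℝ) + (w : ℝ) - 1

end PolylineDrawing

/-- An axis-parallel box (possibly degenerated to a segment or a point). -/
structure Box where
  x1 : ℝ
  x2 : ℝ
  y1 : ℝ
  y2 : ℝ
  hx : x1 ≤ x2
  hy : y1 ≤ y2

/-- The set of points of a box. -/
def Box.pts (b : Box) : Set Pt := Set.Icc b.x1 b.x2 ×ˢ Set.Icc b.y1 b.y2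

/-- An orthogonal drawing of a graph `G`: every vertex is an axis-aligned box, and
every edge `uv` is an axis-parallel polygonal chain `chain u v` (its first corner is
the attachment point on the box of `u`, its last corner the attachment point on the
box of `v`). -/
structure OrthDrawing {V : Type*} (G : SimpleGraph V) where
  box : V → Box
  chain : V → V → List Pt
  chain_symm : ∀ u v, chain v u = (chain u v).reverse

namespace OrthDrawing

variable {V : Type*} {G : SimpleGraph V}

/-- The set of points of the curve of edge `uv`. -/
def curve (D : OrthDrawing G) (u v : V) : Set Pt := chainSet (D.chain u v)

/-- The defining elements of the drawing: corners of vertex boxes, and corners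
(attachment points and bends) of edge chains. -/
def points (D : OrthDrawing G) : Set Pt :=
  (⋃ v, ({((D.box v).x1, (D.box v).y1), ((D.box v).x1, (D.box v).y2),
          ((D.box v).x2, (D.box v).y1), ((D.box v).x2, (D.box v).y2)} : Set Pt)) ∪
    ⋃ (u) (v) (_ : G.Adj u v), {p | p ∈ D.chain u v}

/-- All points covered by the drawing (boxes and edge curves). -/
def region (D : OrthDrawing G) : Set Pt :=
  (⋃ v, (D.box v).pts) ∪ ⋃ (u) (v) (_ : G.Adj u v), D.curve u v

/-- The drawing is planar: vertex boxes are pairwise disjoint; every edge curve is a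
simple axis-parallel chain, with genuine bends, joining the boxes of its endpoints;
an edge curve meets a vertex box only in its attachment points; and two distinct
edge curves intersect only in common endpoints. -/
def IsPlanar (D : OrthDrawing G) : Prop :=
  (∀ u v : V, u ≠ v → Disjoint (D.box u).pts (D.box v).pts) ∧
  (∀ u v, G.Adj u v → IsSimpleChain (D.chain u v) ∧ IsOrthoChain (D.chain u v) ∧
      GenuineBends (D.chain u v)) ∧
  (∀ u v, G.Adj u v → ∃ p q l, D.chain u v = p :: (l ++ [q]) ∧
      p ∈ (D.box u).pts ∧ q ∈ (D.box v).pts) ∧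
  (∀ u v w, G.Adj u v → D.curve u v ∩ (D.box w).pts ⊆
      {p | (w = u ∧ (D.chain u v).head? = some p) ∨
           (w = v ∧ (D.chain u v).getLast? = some p)}) ∧
  (∀ u v x y, G.Adj u v → G.Adj x y → s(u, v) ≠ s(x, y) →
      D.curve u v ∩ D.curve x y ⊆
        {p | ((D.chain u v).head? = some p ∨ (D.chain u v).getLast? = some p) ∧
             ((D.chain x y).head? = some p ∨ (D.chain x y).getLast? = some p)})

/-- A flat drawing: every vertex box is degenerated to a horizontal segment. -/
def IsFlat (D : OrthDrawing G) : Prop := ∀ v, (D.box v).y1 = (D.box v).y2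

/-- A visibility representation: an orthogonal drawing without bends, i.e. every
edge is a single horizontal or vertical segment. -/
def IsVR (D : OrthDrawing G) : Prop := ∀ u v, G.Adj u v → (D.chain u v).length = 2

/-- Every edge curve is a y-monotone path. -/
def IsYMonotone (D : OrthDrawing G) : Prop := ∀ u v, G.Adj u v → IsMonoChain (D.chain u v)

/-- All defining elements have integer coordinates. -/
def IntCoords (D : OrthDrawing G) : Prop := ∀ p ∈ D.points, IsIntPt p

/-- The drawing fits (after translation) in the rows `1, …, h`. -/
def InHeight (D : OrthDrawing G) (h : ℕ) : Prop :=
  ∃ y0 : ℤ, ∀ p ∈ D.points, (y0 : ℝ) ≤ p.2 ∧ p.2 ≤ (y0 : ℝ) + (h : ℝ) - 1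

/-- The drawing fits (after translation) in the columns `1, …, w`. -/
def InWidth (D : OrthDrawing G) (w : ℕ) : Prop :=
  ∃ x0 : ℤ, ∀ p ∈ D.points, (x0 : ℝ) ≤ p.1 ∧ p.1 ≤ (x0 : ℝ) + (w : ℝ) - 1

end OrthDrawing

/-- The total number of bends of a poly-line drawing. -/
def PolylineDrawing.bendCount {V : Type} [Fintype V] [DecidableEq V]
    {G : SimpleGraph V} [DecidableRel G.Adj] (D : PolylineDrawing G) : ℕ :=
  ∑ e ∈ G.edgeFinset, Sym2.lift
    ⟨fun u v => (D.bends u v).length,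
     fun u v => by simp only [D.bends_symm u v, List.length_reverse]⟩ e


namespace FlatVR

/-! ### An abstract ordering lemma -/

theorem exists_order {X : Type*} [DecidableEq X] (R : X → X → Prop) (β : X → ℝ)
    (irr : ∀ a, ¬ R a a) (S : Finset X)
    (tr : ∀ a ∈ S, ∀ b ∈ S, ∀ c ∈ S, β a ≤ β c → β b ≤ β c → R a c → R c b → R a b) :
    ∃ f : X → ℝ, Set.InjOn f S ∧ ∀ a ∈ S, ∀ b ∈ S, R a b → f a < f b := by
  induction S using Finset.induction_on_max_value β with
  | empty => exact ⟨fun _ => 0, by simp, by simp⟩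
  | insert c S hc hmax ih =>
    obtain ⟨f, finj, hf⟩ := ih (fun a ha b hb c hc =>
      tr a (Finset.mem_insert_of_mem ha) b (Finset.mem_insert_of_mem hb) c
        (Finset.mem_insert_of_mem hc))
    classical
    have tr' : ∀ a ∈ S, ∀ b ∈ S, R a c → R c b → R a b := fun a ha b hb h1 h2 =>
      tr a (Finset.mem_insert_of_mem ha) b (Finset.mem_insert_of_mem hb) c
        (Finset.mem_insert_self _ _) (hmax a ha) (hmax b hb) h1 h2
    obtain ⟨m, hm1, hm2⟩ := Order.exists_between_finsets
      ((S.filter (fun a => R a c)).image f) ((S.filter (fun a => R c a)).image f) (by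
        intro x hx y hy
        simp only [Finset.mem_image, Finset.mem_filter] at hx hy
        obtain ⟨a, ⟨ha, hac⟩, rfl⟩ := hx
        obtain ⟨b, ⟨hb, hcb⟩, rfl⟩ := hy
        exact hf a ha b hb (tr' a ha b hb hac hcb))
    obtain ⟨t, ht1, ht2⟩ := Order.exists_between_finsets
      ((S.image f).filter (fun x => x ≤ m)) ((S.image f).filter (fun x => m < x)) (by
        intro x hx y hy
        simp only [Finset.mem_filter] at hx hy
        linarith [hx.2, hy.2])
    have hne : ∀ a ∈ S, f a ≠ t := by
      intro a ha h
      rcases le_or_gt (f a) m with h1 | h1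
      · have := ht1 (f a) (by simp only [Finset.mem_filter, Finset.mem_image]; exact ⟨⟨a, ha, rfl⟩, h1⟩)
        linarith
      · have := ht2 (f a) (by simp only [Finset.mem_filter, Finset.mem_image]; exact ⟨⟨a, ha, rfl⟩, h1⟩)
        linarith
    have hl : ∀ a ∈ S, R a c → f a < t := by
      intro a ha h
      have h1 := hm1 (f a) (by simp only [Finset.mem_image, Finset.mem_filter]; exact ⟨a, ⟨ha, h⟩, rfl⟩)
      exact ht1 (f a) (by simp only [Finset.mem_filter, Finset.mem_image]; exact ⟨⟨a, ha, rfl⟩, h1.le⟩)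
    have hu : ∀ a ∈ S, R c a → t < f a := by
      intro a ha h
      have h1 := hm2 (f a) (by simp only [Finset.mem_image, Finset.mem_filter]; exact ⟨a, ⟨ha, h⟩, rfl⟩)
      exact ht2 (f a) (by simp only [Finset.mem_filter, Finset.mem_image]; exact ⟨⟨a, ha, rfl⟩, h1⟩)
    have hnc : ∀ a ∈ S, a ≠ c := fun a ha h => hc (h ▸ ha)
    refine ⟨Function.update f c t, ?_, ?_⟩
    · intro a ha b hb hab
      simp only [Finset.coe_insert, Set.mem_insert_iff, Finset.mem_coe] at ha hb
      rcases ha with rfl | ha <;> rcases hb with rfl | hb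
      · rfl
      · simp only [Function.update_self, Function.update_of_ne (hnc b hb)] at hab
        exact absurd hab.symm (hne b hb)
      · simp only [Function.update_self, Function.update_of_ne (hnc a ha)] at hab
        exact absurd hab (hne a ha)
      · simp only [Function.update_of_ne (hnc a ha), Function.update_of_ne (hnc b hb)] at hab
        exact finj ha hb hab
    · intro a ha b hb hab
      simp only [Finset.mem_insert] at ha hb
      rcases ha with rfl | ha <;> rcases hb with rfl | hb
      · exact absurd hab (irr _)
      · simp only [Function.update_self, Function.update_of_ne (hnc b hb)]
        exact hu b hb hab
      · simp only [Function.update_self, Function.update_of_ne (hnc a ha)]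
        exact hl a ha hab
      · simp only [Function.update_of_ne (hnc a ha), Function.update_of_ne (hnc b hb)]
        exact hf a ha b hb hab

/-! ### Systems of non-crossing y-monotone items -/

/-- Pairwise non-crossing y-monotone curves (or single points), which are named by unordered
pairs of vertices. -/
structure Items {V : Type} (pos : V → Pt) (X : Finset (Sym2 V)) (K : Sym2 V → Set Pt)
    (lo hi : Sym2 V → ℝ) : Prop where
  compact : ∀ z ∈ X, IsCompact (K z)
  fib : ∀ z ∈ X, ∀ y p q t, (p, y) ∈ K z → (q, y) ∈ K z → p ≤ t → t ≤ q → (t, y) ∈ K z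
  ends : ∀ z ∈ X, ∀ u ∈ z, ∀ v ∈ z, (pos u).2 = (pos v).2 → u = v
  alive : ∀ z ∈ X, ∀ y, (∃ x, (x, y) ∈ K z) ↔ lo z ≤ y ∧ y ≤ hi z
  pos_mem : ∀ z ∈ X, ∀ u ∈ z, pos u ∈ K z
  pos_end : ∀ z ∈ X, ∀ u ∈ z, (pos u).2 = lo z ∨ (pos u).2 = hi z
  inter : ∀ z ∈ X, ∀ w ∈ X, z ≠ w → ∀ p ∈ K z, p ∈ K w → ∃ u, u ∈ z ∧ u ∈ w ∧ p = pos u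
  vert : ∀ z ∈ X, ∀ u, u ∉ z → pos u ∉ K z

/-- `a` is completely to the left of `b` at height `y`. -/
def LeftAt {V : Type} (K : Sym2 V → Set Pt) (y : ℝ) (a b : Sym2 V) : Prop :=
  (∃ p, (p, y) ∈ K a) ∧ (∃ q, (q, y) ∈ K b) ∧ ∀ p q, (p, y) ∈ K a → (q, y) ∈ K b → p < q

def LeftOf {V : Type} (K : Sym2 V → Set Pt) (a b : Sym2 V) : Prop := ∃ y, LeftAt K y a b

section items

variable {V : Type} {pos : V → Pt} {X : Finset (Sym2 V)} {K : Sym2 V → Set Pt}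
    {lo hi : Sym2 V → ℝ}

theorem LeftAt.disj {y : ℝ} {a b : Sym2 V} (h : LeftAt K y a b) (t : ℝ) (h1 : (t, y) ∈ K a)
    (h2 : (t, y) ∈ K b) : False := lt_irrefl _ (h.2.2 t t h1 h2)

theorem Items.leftAt (H : Items pos X K lo hi) {a b : Sym2 V} (ha : a ∈ X) (hb : b ∈ X) {y : ℝ}
    (hd : ∀ t, (t, y) ∈ K a → (t, y) ∈ K b → False) {p q : ℝ} (hp : (p, y) ∈ K a)
    (hq : (q, y) ∈ K b) (hpq : p < q) : LeftAt K y a b := by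
  refine ⟨⟨p, hp⟩, ⟨q, hq⟩, fun p' q' hp' hq' => ?_⟩
  by_contra hcon
  push Not at hcon
  rcases le_or_gt p q' with h | h
  · exact hd q' (H.fib a ha y p p' q' hp hp' h hcon) hq'
  · exact hd p hp (H.fib b hb y q' q p hq' hq h.le hpq.le)

theorem closed_le {A B : Set Pt} (hA : IsCompact A) (hB : IsCompact B) :
    IsClosed {y : ℝ | ∃ p q, (p, y) ∈ A ∧ (q, y) ∈ B ∧ p ≤ q} := by
  have h1 : IsCompact ((A ×ˢ B) ∩ {P : Pt × Pt | P.1.2 = P.2.2 ∧ P.1.1 ≤ P.2.1}) := by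
    refine (hA.prod hB).inter_right (IsClosed.inter ?_ ?_)
    · exact isClosed_eq (by fun_prop) (by fun_prop)
    · exact isClosed_le (f := fun P : Pt × Pt => P.1.1) (g := fun P : Pt × Pt => P.2.1)
        (by fun_prop) (by fun_prop)
  have h2 := (h1.image (f := fun P : Pt × Pt => P.1.2) (by fun_prop)).isClosed
  convert h2 using 1
  ext y
  constructor
  · rintro ⟨p, q, hp, hq, h⟩
    exact ⟨((p, y), (q, y)), ⟨⟨hp, hq⟩, rfl, h⟩, rfl⟩
  · rintro ⟨⟨⟨p, y1⟩, ⟨q, y2⟩⟩, ⟨⟨hp, hq⟩, h1, h⟩, h2⟩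
    simp only at h1 h2 hp hq h
    subst h1; subst h2
    exact ⟨p, q, hp, hq, h⟩

theorem Items.consistent (H : Items pos X K lo hi) {a b : Sym2 V} (ha : a ∈ X) (hb : b ∈ X)
    {y1 y2 : ℝ} (h1 : LeftAt K y1 a b) (ha2 : ∃ p, (p, y2) ∈ K a) (hb2 : ∃ p, (p, y2) ∈ K b)
    (hd : ∀ t, (t, y2) ∈ K a → (t, y2) ∈ K b → False) : LeftAt K y2 a b := by
  have hab : a ≠ b := by
    rintro rfl
    obtain ⟨p, hp⟩ := h1.1
    exact h1.disj p hp hp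
  obtain ⟨p, hp⟩ := ha2
  obtain ⟨q, hq⟩ := hb2
  rcases lt_trichotomy p q with hpq | hpq | hpq
  · exact H.leftAt ha hb hd hp hq hpq
  · subst hpq; exact (hd p hp hq).elim
  exfalso
  have a1 := (H.alive a ha y1).1 h1.1
  have b1 := (H.alive b hb y1).1 h1.2.1
  have a2 := (H.alive a ha y2).1 ⟨p, hp⟩
  have b2 := (H.alive b hb y2).1 ⟨q, hq⟩
  have hdis : ∀ y ∈ Set.uIcc y1 y2, ∀ t, (t, y) ∈ K a → (t, y) ∈ K b → False := by
    intro y hy t hta htb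
    by_cases e1 : y = y1
    · subst e1; exact h1.disj t hta htb
    by_cases e2 : y = y2
    · subst e2; exact hd t hta htb
    obtain ⟨u, hua, hub, hu⟩ := H.inter a ha b hb hab _ hta htb
    have hy2 : y = (pos u).2 := by rw [← hu]
    have := H.pos_end a ha u hua
    rw [← hy2] at this
    rw [Set.mem_uIcc] at hy
    rcases hy with hy | hy
    · have l1 := lt_of_le_of_ne hy.1 (Ne.symm e1)
      have l2 := lt_of_le_of_ne hy.2 e2
      rcases this with h | h <;> linarith
    · have l1 := lt_of_le_of_ne hy.1 (Ne.symm e2)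
      have l2 := lt_of_le_of_ne hy.2 e1
      rcases this with h | h <;> linarith
  have hal : ∀ y ∈ Set.uIcc y1 y2, (∃ p, (p, y) ∈ K a) ∧ ∃ q, (q, y) ∈ K b := by
    intro y hy
    rw [H.alive a ha, H.alive b hb]
    rw [Set.mem_uIcc] at hy
    rcases hy with hy | hy <;> refine ⟨⟨?_, ?_⟩, ?_, ?_⟩ <;> linarith
  have hconn : IsPreconnected (Set.uIcc y1 y2) := isPreconnected_uIcc
  rw [isPreconnected_closed_iff] at hconn
  obtain ⟨y, hy, ⟨p1, q1, hp1, hq1, hle1⟩, ⟨q2, p2, hq2, hp2, hle2⟩⟩ := hconn _ _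
    (closed_le (H.compact a ha) (H.compact b hb))
    (closed_le (H.compact b hb) (H.compact a ha))
    (by
      intro y hy
      obtain ⟨⟨p, hp⟩, q, hq⟩ := hal y hy
      rcases le_total p q with h | h
      · exact Or.inl ⟨p, q, hp, hq, h⟩
      · exact Or.inr ⟨q, p, hq, hp, h⟩)
    ⟨y1, Set.left_mem_uIcc, by
      obtain ⟨⟨p, hp⟩, ⟨q, hq⟩, h⟩ := h1
      exact ⟨p, q, hp, hq, (h p q hp hq).le⟩⟩
    ⟨y2, Set.right_mem_uIcc, q, p, hq, hp, hpq.le⟩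
  rcases hle1.lt_or_eq with h | h
  · have := (H.leftAt ha hb (hdis y hy) hp1 hq1 h).2.2 p2 q2 hp2 hq2
    linarith
  · subst h
    exact hdis y hy _ hp1 hq1

theorem Items.trans (H : Items pos X K lo hi) {a b c : Sym2 V} (ha : a ∈ X) (hb : b ∈ X)
    (hc : c ∈ X) (hac : lo a ≤ lo c) (hbc : lo b ≤ lo c) (h1 : LeftOf K a c)
    (h2 : LeftOf K c b) : LeftOf K a b := by
  obtain ⟨y1, h1⟩ := h1
  obtain ⟨y2, h2⟩ := h2
  have comp : ∀ y, LeftAt K y a c → LeftAt K y c b → LeftAt K y a b := by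
    intro y h1 h2
    refine ⟨h1.1, h2.2.1, fun p q hp hq => ?_⟩
    obtain ⟨r, hr⟩ := h2.1
    exact (h1.2.2 p r hp hr).trans (h2.2.2 r q hr hq)
  have irr : ∀ {y d}, ¬ LeftAt K y d d := by
    intro y d h
    obtain ⟨p, hp⟩ := h.1
    exact h.disj p hp hp
  have a1 := (H.alive a ha y1).1 h1.1
  have c1 := (H.alive c hc y1).1 h1.2.1
  have c2 := (H.alive c hc y2).1 h2.1
  have b2 := (H.alive b hb y2).1 h2.2.1
  rcases le_total y1 y2 with hy | hy
  · have b1 := (H.alive b hb y1).2 ⟨by linarith, by linarith⟩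
    by_cases hd : ∀ t, (t, y1) ∈ K c → (t, y1) ∈ K b → False
    · exact ⟨y1, comp y1 h1 (H.consistent hc hb h2 h1.2.1 b1 hd)⟩
    · push Not at hd
      obtain ⟨t, htc, htb, -⟩ := hd
      have hcb : c ≠ b := by rintro rfl; exact irr h2
      obtain ⟨u, huc, hub, hu⟩ := H.inter c hc b hb hcb _ htc htb
      obtain ⟨p, hp⟩ := h1.1
      refine ⟨y1, H.leftAt ha hb ?_ hp htb (h1.2.2 p t hp htc)⟩
      intro s hsa hsb
      have hab : a ≠ b := by
        rintro rfl
        exact h1.disj t htb htc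
      obtain ⟨w, hwa, hwb, hw⟩ := H.inter a ha b hb hab _ hsa hsb
      have : w = u := H.ends b hb w hwb u hub (by rw [← hw, ← hu])
      subst this
      rw [← hu] at hw
      have hst : s = t := by simpa using hw
      subst hst
      exact h1.disj s hsa htc
  · have a2 := (H.alive a ha y2).2 ⟨by linarith, by linarith⟩
    by_cases hd : ∀ t, (t, y2) ∈ K a → (t, y2) ∈ K c → False
    · exact ⟨y2, comp y2 (H.consistent ha hc h1 a2 h2.1 hd) h2⟩
    · push Not at hd
      obtain ⟨t, hta, htc, -⟩ := hd
      have hac' : a ≠ c := by rintro rfl; exact irr h1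
      obtain ⟨u, hua, huc, hu⟩ := H.inter a ha c hc hac' _ hta htc
      obtain ⟨q, hq⟩ := h2.2.1
      refine ⟨y2, H.leftAt ha hb ?_ hta hq (h2.2.2 t q htc hq)⟩
      intro s hsa hsb
      have hab : a ≠ b := by
        rintro rfl
        exact h2.disj t htc hta
      obtain ⟨w, hwa, hwb, hw⟩ := H.inter a ha b hb hab _ hsa hsb
      have : w = u := H.ends a ha w hwa u hua (by rw [← hw, ← hu])
      subst this
      rw [← hu] at hw
      have hst : s = t := by simpa using hw
      subst hst
      exact h2.disj s htc hsb

/-- Integer columns for the items. -/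
theorem Items.columns (H : Items pos X K lo hi) : ∃ g : Sym2 V → ℕ, Set.InjOn g X ∧
    (∀ a ∈ X, g a < X.card) ∧ ∀ a ∈ X, ∀ b ∈ X, LeftOf K a b → g a < g b := by
  classical
  obtain ⟨f, finj, hf⟩ := exists_order (LeftOf K) lo (by
      rintro a ⟨y, h⟩
      obtain ⟨p, hp⟩ := h.1
      exact h.disj p hp hp) X
    (fun a ha b hb c hc => H.trans ha hb hc)
  have key : ∀ a ∈ X, ∀ b ∈ X, f a < f b →
      (X.filter (fun x => f x < f a)).card < (X.filter (fun x => f x < f b)).card := by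
    intro a ha b hb hab
    refine Finset.card_lt_card ((Finset.ssubset_iff_of_subset ?_).2 ⟨a, ?_, ?_⟩)
    · intro x hx
      simp only [Finset.mem_filter] at hx ⊢
      exact ⟨hx.1, hx.2.trans hab⟩
    · simp [ha, hab]
    · simp
  refine ⟨fun z => (X.filter (fun x => f x < f z)).card, ?_, ?_, ?_⟩
  · intro a ha b hb hab
    apply finj ha hb
    rcases lt_trichotomy (f a) (f b) with h | h | h
    · exact absurd hab (key a ha b hb h).ne
    · exact h
    · exact absurd hab (key b hb a ha h).ne'
  · intro a ha
    refine Finset.card_lt_card ((Finset.ssubset_iff_of_subset (Finset.filter_subset _ _)).2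
      ⟨a, ha, by simp⟩)
  · intro a ha b hb h
    exact key a ha b hb (hf a ha b hb h)

/-- An item which passes the row of `v` to the left of `v` is left of all items at `v`. -/
theorem Items.left_of_vertex (H : Items pos X K lo hi) {a b : Sym2 V} (ha : a ∈ X) (hb : b ∈ X)
    {v : V} (hva : v ∉ a) (hvb : v ∈ b) {p : ℝ} (hp : (p, (pos v).2) ∈ K a)
    (hlt : p < (pos v).1) : LeftOf K a b := by
  refine ⟨_, H.leftAt ha hb ?_ hp (H.pos_mem b hb v hvb) hlt⟩
  intro t hta htb
  have hab : a ≠ b := by rintro rfl; exact hva hvb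
  obtain ⟨w, hwa, hwb, hw⟩ := H.inter a ha b hb hab _ hta htb
  have : w = v := H.ends b hb w hwb v hvb (by rw [← hw])
  exact hva (this ▸ hwa)

theorem Items.right_of_vertex (H : Items pos X K lo hi) {a b : Sym2 V} (ha : a ∈ X) (hb : b ∈ X)
    {v : V} (hva : v ∉ a) (hvb : v ∈ b) {p : ℝ} (hp : (p, (pos v).2) ∈ K a)
    (hlt : (pos v).1 < p) : LeftOf K b a := by
  refine ⟨_, H.leftAt hb ha ?_ (H.pos_mem b hb v hvb) hp hlt⟩
  intro t htb hta
  have hab : a ≠ b := by rintro rfl; exact hva hvb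
  obtain ⟨w, hwa, hwb, hw⟩ := H.inter a ha b hb hab _ hta htb
  have : w = v := H.ends b hb w hwb v hvb (by rw [← hw])
  exact hva (this ▸ hwa)

end items

/-! ### Ascending polygonal chains -/

/-- The polygonal chain starting at `a` and continuing with the corners `l`. -/
def poly : Pt → List Pt → Set Pt
  | a, [] => {a}
  | a, b :: l => segment ℝ a b ∪ poly b l

theorem poly_start (a : Pt) (l : List Pt) : a ∈ poly a l := by
  cases l with
  | nil => simp [poly]
  | cons b l => exact Or.inl (left_mem_segment ℝ a b)

theorem poly_mem (a : Pt) (l : List Pt) : ∀ p ∈ l, p ∈ poly a l := by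
  induction l generalizing a with
  | nil => simp
  | cons b l ih =>
    intro p hp
    rw [List.mem_cons] at hp
    rcases hp with rfl | hp
    · exact Or.inr (poly_start _ _)
    · exact Or.inr (ih b p hp)

theorem chainSet_eq_poly (a b : Pt) (l : List Pt) : chainSet (a :: b :: l) = poly a (b :: l) := by
  induction l generalizing a b with
  | nil => simp [chainSet, chainSegs, poly, right_mem_segment]
  | cons c l ih =>
    have : chainSet (a :: b :: c :: l) = segment ℝ a b ∪ chainSet (b :: c :: l) := by
      simp [chainSet, chainSegs]
    rw [this, ih]
    rfl

theorem isCompact_seg (a b : Pt) : IsCompact (segment ℝ a b) := by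
  rw [segment_eq_image_lineMap]
  exact isCompact_Icc.image AffineMap.lineMap_continuous

theorem poly_compact (a : Pt) (l : List Pt) : IsCompact (poly a l) := by
  induction l generalizing a with
  | nil => exact isCompact_singleton
  | cons b l ih => exact (isCompact_seg a b).union (ih b)

theorem poly_conn (a : Pt) (l : List Pt) : IsPreconnected (poly a l) := by
  induction l generalizing a with
  | nil => exact isPreconnected_singleton
  | cons b l ih =>
    exact IsPreconnected.union b (right_mem_segment ℝ a b) (poly_start b l)
      (convex_segment a b).isPreconnected (ih b)

theorem seg_height {a b p : Pt} (hab : a.2 ≤ b.2) (hp : p ∈ segment ℝ a b) :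
    a.2 ≤ p.2 ∧ p.2 ≤ b.2 := by
  obtain ⟨s, t, hs, ht, hst, rfl⟩ := hp
  simp only [Prod.snd_add, Prod.smul_snd, smul_eq_mul]
  have : s = 1 - t := by linarith
  subst this
  constructor <;> nlinarith

theorem seg_fib {a b : Pt} {y p q t : ℝ} (hp : (p, y) ∈ segment ℝ a b)
    (hq : (q, y) ∈ segment ℝ a b) (h1 : p ≤ t) (h2 : t ≤ q) : (t, y) ∈ segment ℝ a b := by
  apply (convex_segment a b).segment_subset hp hq
  rw [← Prod.image_mk_segment_left]
  refine ⟨t, ?_, rfl⟩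
  rw [segment_eq_Icc (h1.trans h2)]
  exact ⟨h1, h2⟩

theorem poly_ge (a : Pt) (l : List Pt) (h : ((a :: l).map Prod.snd).IsChain (· ≤ ·)) :
    ∀ p ∈ poly a l, a.2 ≤ p.2 := by
  induction l generalizing a with
  | nil => simp [poly]
  | cons b l ih =>
    simp only [List.map_cons, List.isChain_cons_cons] at h
    rintro p (hp | hp)
    · exact (seg_height h.1 hp).1
    · exact h.1.trans (ih b (by simpa using h.2) p hp)

theorem poly_le (a z : Pt) (l : List Pt) (h : ((a :: (l ++ [z])).map Prod.snd).IsChain (· ≤ ·)) :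
    ∀ p ∈ poly a (l ++ [z]), p.2 ≤ z.2 := by
  induction l generalizing a with
  | nil =>
    simp only [List.nil_append, List.map_cons, List.isChain_cons_cons] at h
    rintro p (hp | hp)
    · exact (seg_height h.1 hp).2
    · simp only [poly, Set.mem_singleton_iff] at hp; rw [hp]
  | cons b l ih =>
    simp only [List.cons_append, List.map_cons, List.isChain_cons_cons] at h
    have ih' := ih b (by simpa using h.2)
    rintro p (hp | hp)
    · exact (seg_height h.1 hp).2.trans (ih' b (poly_start _ _))
    · exact ih' p hp

theorem poly_fib (a : Pt) (l : List Pt) (h : ((a :: l).map Prod.snd).IsChain (· ≤ ·))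
    (y p q t : ℝ) (hp : (p, y) ∈ poly a l) (hq : (q, y) ∈ poly a l) (h1 : p ≤ t) (h2 : t ≤ q) :
    (t, y) ∈ poly a l := by
  induction l generalizing a p q t with
  | nil =>
    simp only [poly, Set.mem_singleton_iff] at hp hq ⊢
    rw [← hp] at hq
    have : q = p := by simpa using hq
    subst this
    rw [← hp, le_antisymm h2 h1]
  | cons b l ih =>
    simp only [List.map_cons, List.isChain_cons_cons] at h
    have hge := poly_ge b l (by simpa using h.2)
    have ih' := ih b (by simpa using h.2)
    have hmid : (∃ r, (r, y) ∈ segment ℝ a b) → (∃ r, (r, y) ∈ poly b l) → b = (b.1, y) := by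
      rintro ⟨r, hr⟩ ⟨r', hr'⟩
      have e1 := (seg_height h.1 hr).2
      have e2 := hge _ hr'
      exact Prod.ext rfl (le_antisymm e2 e1)
    rcases hp with hp | hp <;> rcases hq with hq | hq
    · exact Or.inl (seg_fib hp hq h1 h2)
    · have hb := hmid ⟨_, hp⟩ ⟨_, hq⟩
      have hb1 : (b.1, y) ∈ segment ℝ a b := by rw [← hb]; exact right_mem_segment ℝ a b
      have hb2 : (b.1, y) ∈ poly b l := by rw [← hb]; exact poly_start b l
      rcases le_total t b.1 with h3 | h3
      · exact Or.inl (seg_fib hp hb1 h1 h3)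
      · exact Or.inr (ih' _ _ _ hb2 hq h3 h2)
    · have hb := hmid ⟨_, hq⟩ ⟨_, hp⟩
      have hb1 : (b.1, y) ∈ segment ℝ a b := by rw [← hb]; exact right_mem_segment ℝ a b
      have hb2 : (b.1, y) ∈ poly b l := by rw [← hb]; exact poly_start b l
      rcases le_total t b.1 with h3 | h3
      · exact Or.inr (ih' _ _ _ hp hb2 h1 h3)
      · exact Or.inl (seg_fib hb1 hq h3 h2)
    · exact Or.inr (ih' _ _ _ hp hq h1 h2)

theorem mem_chainSegs (l : List Pt) (a b : Pt) : (a, b) ∈ chainSegs l ↔ [a, b] <:+: l := by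
  induction l with
  | nil => simp [chainSegs]
  | cons c l ih =>
    cases l with
    | nil =>
      simp only [chainSegs, List.tail_cons, List.zip_nil_right, List.not_mem_nil, false_iff]
      intro h
      have := h.length_le
      simp at this
    | cons d l =>
      rw [List.infix_cons_iff, ← ih]
      simp [chainSegs]

theorem chainSet_reverse (l : List Pt) : chainSet l.reverse = chainSet l := by
  have key : ∀ l : List Pt, chainSet l ⊆ chainSet l.reverse := by
    intro l p hp
    simp only [chainSet, Set.mem_iUnion] at hp ⊢
    obtain ⟨⟨a, b⟩, hs, hp⟩ := hp
    refine ⟨(b, a), ?_, ?_⟩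
    · rw [mem_chainSegs] at hs ⊢
      simpa using List.reverse_infix.2 hs
    · rwa [segment_symm]
  apply Set.Subset.antisymm
  · simpa using key l.reverse
  · exact key l

section drawing

variable {V : Type} {G : SimpleGraph V}

theorem chain_symm (D : PolylineDrawing G) (u v : V) : D.chain v u = (D.chain u v).reverse := by
  simp [PolylineDrawing.chain, D.bends_symm u v]

theorem curve_symm (D : PolylineDrawing G) (u v : V) : D.curve v u = D.curve u v := by
  rw [PolylineDrawing.curve, chain_symm, chainSet_reverse, PolylineDrawing.curve]

theorem curve_eq (D : PolylineDrawing G) (u v : V) :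
    D.curve u v = poly (D.pos u) (D.bends u v ++ [D.pos v]) := by
  rw [PolylineDrawing.curve, PolylineDrawing.chain]
  cases h : D.bends u v ++ [D.pos v] with
  | nil => simp at h
  | cons b l => rw [chainSet_eq_poly]

/-- Everything we need about the curves of the edges. -/
theorem curve_props (D : PolylineDrawing G) (hmono : D.IsYMonotone) (u v : V) (h : G.Adj u v) :
    D.pos u ∈ D.curve u v ∧ D.pos v ∈ D.curve u v ∧ (∀ p ∈ D.bends u v, p ∈ D.curve u v) ∧
    IsCompact (D.curve u v) ∧
    (∀ y p q t, (p, y) ∈ D.curve u v → (q, y) ∈ D.curve u v → p ≤ t → t ≤ q →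
      (t, y) ∈ D.curve u v) ∧
    (∀ y, (∃ x, (x, y) ∈ D.curve u v) ↔
      min (D.pos u).2 (D.pos v).2 ≤ y ∧ y ≤ max (D.pos u).2 (D.pos v).2) := by
  have key : ∀ u v : V, ((D.chain u v).map Prod.snd).IsChain (· ≤ ·) →
      (D.pos u ∈ D.curve u v ∧ D.pos v ∈ D.curve u v ∧ (∀ p ∈ D.bends u v, p ∈ D.curve u v) ∧
      IsCompact (D.curve u v) ∧
      (∀ y p q t, (p, y) ∈ D.curve u v → (q, y) ∈ D.curve u v → p ≤ t → t ≤ q →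
        (t, y) ∈ D.curve u v) ∧
      (∀ y, (∃ x, (x, y) ∈ D.curve u v) ↔
        min (D.pos u).2 (D.pos v).2 ≤ y ∧ y ≤ max (D.pos u).2 (D.pos v).2)) := by
    intro u v hc
    rw [curve_eq]
    rw [PolylineDrawing.chain] at hc
    have hv : D.pos v ∈ poly (D.pos u) (D.bends u v ++ [D.pos v]) := poly_mem _ _ _ (by simp)
    have hu := poly_start (D.pos u) (D.bends u v ++ [D.pos v])
    have huv : (D.pos u).2 ≤ (D.pos v).2 := poly_ge _ _ hc _ hv
    refine ⟨hu, hv, fun p hp => poly_mem _ _ _ (by simp [hp]), poly_compact _ _,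
      poly_fib _ _ hc, fun y => ?_⟩
    rw [min_eq_left huv, max_eq_right huv]
    constructor
    · rintro ⟨x, hx⟩
      exact ⟨poly_ge _ _ hc _ hx, poly_le _ _ _ hc _ hx⟩
    · intro hy
      have hpc := ((poly_conn (D.pos u) (D.bends u v ++ [D.pos v])).image Prod.snd
        continuous_snd.continuousOn).ordConnected
      obtain ⟨⟨x, y'⟩, hx, rfl⟩ := hpc.out ⟨_, hu, rfl⟩ ⟨_, hv, rfl⟩ hy
      exact ⟨x, hx⟩
  rcases hmono u v h with h | h
  · exact key u v h
  · have h' : ((D.chain v u).map Prod.snd).IsChain (· ≤ ·) := by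
      rw [chain_symm, List.map_reverse, List.isChain_reverse]
      exact h
    have := key v u h'
    rw [curve_symm, min_comm, max_comm, D.bends_symm u v] at this
    obtain ⟨h1, h2, h3, h4⟩ := this
    exact ⟨h2, h1, fun p hp => h3 p (by simpa using hp), h4⟩

end drawing

/-! ### The items of a drawing -/

section concrete

set_option linter.unusedSectionVars false

variable {V : Type} [Fintype V] [DecidableEq V] {G : SimpleGraph V} [DecidableRel G.Adj]

/-- All endpoints of `z` lie on one row. -/
def Flat (D : PolylineDrawing G) (z : Sym2 V) : Prop :=
  ∀ u ∈ z, ∀ v ∈ z, (D.pos u).2 = (D.pos v).2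

/-- All edges at `v` are horizontal. -/
def Lone (D : PolylineDrawing G) (v : V) : Prop :=
  ∀ w, G.Adj v w → (D.pos w).2 = (D.pos v).2

open Classical in
/-- The items: edges that are not horizontal, and vertices without such edges. -/
noncomputable def itemSet (D : PolylineDrawing G) : Finset (Sym2 V) :=
  G.edgeFinset.filter (fun z => ¬ Flat D z) ∪
    (Finset.univ.filter (fun v => Lone D v)).image (fun v => s(v, v))

theorem flat_mk (D : PolylineDrawing G) (u v : V) :
    Flat D s(u, v) ↔ (D.pos u).2 = (D.pos v).2 := by
  constructor
  · intro h; exact h u (by simp) v (by simp)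
  · intro h a ha b hb
    rw [Sym2.mem_iff] at ha hb
    rcases ha with rfl | rfl <;> rcases hb with rfl | rfl <;> simp [h]

theorem mem_itemSet (D : PolylineDrawing G) (z : Sym2 V) : z ∈ itemSet D ↔
    (∃ u v, z = s(u, v) ∧ G.Adj u v ∧ (D.pos u).2 ≠ (D.pos v).2) ∨
      ∃ v, z = s(v, v) ∧ Lone D v := by
  classical
  simp only [itemSet, Finset.mem_union, Finset.mem_filter, SimpleGraph.mem_edgeFinset,
    Finset.mem_image, Finset.mem_univ, true_and]
  refine or_congr ?_ ?_
  · induction z using Sym2.ind with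
    | _ u v =>
    rw [flat_mk, SimpleGraph.mem_edgeSet]
    constructor
    · intro h; exact ⟨u, v, rfl, h⟩
    · rintro ⟨a, b, hab, h1, h2⟩
      rw [Sym2.eq_iff] at hab
      rcases hab with ⟨rfl, rfl⟩ | ⟨rfl, rfl⟩
      · exact ⟨h1, h2⟩
      · exact ⟨h1.symm, h2.symm⟩
  · constructor
    · rintro ⟨v, h, rfl⟩; exact ⟨v, rfl, h⟩
    · rintro ⟨v, rfl, h⟩; exact ⟨v, h, rfl⟩

theorem card_itemSet (D : PolylineDrawing G) (hconn : G.Connected) :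
    (itemSet D).card ≤ max (Fintype.card V) G.edgeFinset.card := by
  classical
  by_cases hall : ∀ u v, G.Adj u v → (D.pos u).2 = (D.pos v).2
  · refine le_max_of_le_left ?_
    have : itemSet D ⊆ (Finset.univ : Finset V).image (fun v => s(v, v)) := by
      intro z hz
      rw [mem_itemSet] at hz
      rcases hz with ⟨u, v, -, h, h'⟩ | ⟨v, rfl, -⟩
      · exact absurd (hall u v h) h'
      · simp
    exact (Finset.card_le_card this).trans Finset.card_image_le
  · push Not at hall
    obtain ⟨r, r', hr, hr'⟩ := hall
    refine le_max_of_le_right ?_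
    have hpar : ∀ v, ∃ w, v ≠ r → G.Adj v w ∧ G.dist w r < G.dist v r := by
      intro v
      by_cases hv : v = r
      · exact ⟨v, fun h => absurd hv h⟩
      obtain ⟨p, hp⟩ := (hconn.preconnected v r).exists_walk_length_eq_dist
      cases p with
      | nil => exact absurd rfl hv
      | @cons _ w _ h q =>
        refine ⟨w, fun _ => ⟨h, ?_⟩⟩
        have := SimpleGraph.dist_le q
        rw [SimpleGraph.Walk.length_cons] at hp
        omega
    choose par hpar using hpar
    have hlr : ∀ v, Lone D v → v ≠ r := by
      rintro v hv rfl
      exact hr' (hv r' hr).symm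
    rw [← Finset.card_filter_add_card_filter_not (s := G.edgeFinset) (fun z => Flat D z), add_comm]
    refine (Finset.card_union_le _ _).trans (add_le_add le_rfl ?_)
    refine Finset.card_image_le.trans
      (Finset.card_le_card_of_injOn (fun v => s(v, par v)) ?_ ?_)
    · intro v hv
      simp only [Finset.coe_filter, Finset.mem_univ, true_and, Set.mem_ofPred_eq] at hv
      have h := (hpar v (hlr v hv)).1
      simp only [Finset.coe_filter, Set.mem_ofPred_eq, SimpleGraph.mem_edgeFinset,
        SimpleGraph.mem_edgeSet, flat_mk]
      exact ⟨h, (hv _ h).symm⟩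
    · intro v hv w hw hvw
      simp only [Finset.coe_filter, Finset.mem_univ, true_and, Set.mem_ofPred_eq] at hv hw
      have h1 := (hpar v (hlr v hv)).2
      have h2 := (hpar w (hlr w hw)).2
      simp only [Sym2.eq_iff] at hvw
      rcases hvw with ⟨h, -⟩ | ⟨h, h'⟩
      · exact h
      · rw [h'] at h1
        rw [← h] at h2
        omega

/-- The point set of an item. -/
def itemK (D : PolylineDrawing G) (z : Sym2 V) : Set Pt :=
  {p | ∃ u v, z = s(u, v) ∧ ((u = v ∧ p = D.pos u) ∨ (G.Adj u v ∧ p ∈ D.curve u v))}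

theorem itemK_adj (D : PolylineDrawing G) {u v : V} (h : G.Adj u v) :
    itemK D s(u, v) = D.curve u v := by
  ext p
  constructor
  · rintro ⟨a, b, hab, h1⟩
    rw [Sym2.eq_iff] at hab
    rcases h1 with ⟨rfl, -⟩ | ⟨-, h1⟩
    · rcases hab with ⟨rfl, rfl⟩ | ⟨rfl, rfl⟩ <;> exact absurd rfl h.ne
    · rcases hab with ⟨rfl, rfl⟩ | ⟨rfl, rfl⟩
      · exact h1
      · rwa [curve_symm] at h1
  · intro hp
    exact ⟨u, v, rfl, Or.inr ⟨h, hp⟩⟩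

theorem itemK_diag (D : PolylineDrawing G) (v : V) : itemK D s(v, v) = {D.pos v} := by
  ext p
  constructor
  · rintro ⟨a, b, hab, h1⟩
    rw [Sym2.eq_iff] at hab
    have : a = v ∧ b = v := by
      rcases hab with ⟨h, h'⟩ | ⟨h, h'⟩ <;> simp [← h, ← h']
    obtain ⟨rfl, rfl⟩ := this
    rcases h1 with ⟨-, h⟩ | ⟨h, -⟩
    · exact h
    · exact absurd rfl h.ne
  · intro hp
    exact ⟨v, v, rfl, Or.inl ⟨rfl, hp⟩⟩

def itemLo (D : PolylineDrawing G) (z : Sym2 V) : ℝ :=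
  Sym2.lift ⟨fun u v => min (D.pos u).2 (D.pos v).2, fun _ _ => min_comm _ _⟩ z

def itemHi (D : PolylineDrawing G) (z : Sym2 V) : ℝ :=
  Sym2.lift ⟨fun u v => max (D.pos u).2 (D.pos v).2, fun _ _ => max_comm _ _⟩ z

theorem items (D : PolylineDrawing G) (hpl : D.IsPlanar) (hmono : D.IsYMonotone) :
    Items D.pos (itemSet D) (itemK D) (itemLo D) (itemHi D) := by
  obtain ⟨hinj, -, hvert, hcross⟩ := hpl
  have hpos : ∀ z ∈ itemSet D, ∀ u ∈ z, D.pos u ∈ itemK D z := by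
    intro z hz u hu
    rw [mem_itemSet] at hz
    rcases hz with ⟨a, b, rfl, h, h'⟩ | ⟨v, rfl, h⟩
    · rw [itemK_adj D h]
      have := curve_props D hmono a b h
      rw [Sym2.mem_iff] at hu
      rcases hu with rfl | rfl
      · exact this.1
      · exact this.2.1
    · rw [itemK_diag]
      simp only [Sym2.mem_iff, or_self] at hu
      rw [hu]; rfl
  have hv : ∀ z ∈ itemSet D, ∀ u, u ∉ z → D.pos u ∉ itemK D z := by
    intro z hz u hu
    rw [mem_itemSet] at hz
    rcases hz with ⟨a, b, rfl, h, h'⟩ | ⟨v, rfl, h⟩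
    · rw [itemK_adj D h]
      simp only [Sym2.mem_iff, not_or] at hu
      exact hvert a b u h hu.1 hu.2
    · rw [itemK_diag]
      simp only [Sym2.mem_iff, or_self] at hu
      intro h
      exact hu (hinj h)
  refine ⟨?_, ?_, ?_, ?_, hpos, ?_, ?_, hv⟩
  · intro z hz
    rw [mem_itemSet] at hz
    rcases hz with ⟨a, b, rfl, h, h'⟩ | ⟨v, rfl, h⟩
    · rw [itemK_adj D h]
      exact (curve_props D hmono a b h).2.2.2.1
    · rw [itemK_diag]; exact isCompact_singleton
  · intro z hz
    rw [mem_itemSet] at hz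
    rcases hz with ⟨a, b, rfl, h, h'⟩ | ⟨v, rfl, h⟩
    · rw [itemK_adj D h]
      exact (curve_props D hmono a b h).2.2.2.2.1
    · rw [itemK_diag]
      intro y p q t hp hq h1 h2
      simp only [Set.mem_singleton_iff] at hp hq ⊢
      rw [← hp] at hq
      have : q = p := by simpa using hq
      subst this
      rw [← hp, le_antisymm h2 h1]
  · intro z hz u hu v hv huv
    rw [mem_itemSet] at hz
    rcases hz with ⟨a, b, rfl, h, h'⟩ | ⟨w, rfl, h⟩
    · rw [Sym2.mem_iff] at hu hv
      rcases hu with rfl | rfl <;> rcases hv with rfl | rfl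
      · rfl
      · exact absurd huv h'
      · exact absurd huv.symm h'
      · rfl
    · simp only [Sym2.mem_iff, or_self] at hu hv
      rw [hu, hv]
  · intro z hz y
    rw [mem_itemSet] at hz
    rcases hz with ⟨a, b, rfl, h, h'⟩ | ⟨v, rfl, h⟩
    · rw [itemK_adj D h]
      exact (curve_props D hmono a b h).2.2.2.2.2 y
    · rw [itemK_diag]
      simp only [itemLo, itemHi, Sym2.lift_mk, min_self, max_self, Set.mem_singleton_iff]
      constructor
      · rintro ⟨x, hx⟩
        rw [← hx]; simp
      · rintro ⟨h1, h2⟩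
        exact ⟨(D.pos v).1, by rw [le_antisymm h2 h1]⟩
  · intro z hz u hu
    induction z using Sym2.ind with
    | _ a b =>
    simp only [itemLo, itemHi, Sym2.lift_mk]
    rw [Sym2.mem_iff] at hu
    rcases le_total (D.pos a).2 (D.pos b).2 with h | h <;> rcases hu with rfl | rfl <;> simp [h]
  · intro z hz w hw hzw p hpz hpw
    by_cases e1 : ∃ v, z = s(v, v)
    · obtain ⟨v, rfl⟩ := e1
      rw [itemK_diag] at hpz
      refine ⟨v, by simp, ?_, hpz⟩
      by_contra hcon
      refine hv w hw v hcon ?_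
      rw [← show p = D.pos v from hpz]; exact hpw
    by_cases e2 : ∃ v, w = s(v, v)
    · obtain ⟨v, rfl⟩ := e2
      rw [itemK_diag] at hpw
      refine ⟨v, ?_, by simp, hpw⟩
      by_contra hcon
      refine hv z hz v hcon ?_
      rw [← show p = D.pos v from hpw]; exact hpz
    rw [mem_itemSet] at hz hw
    rcases hz with ⟨a, b, rfl, h, -⟩ | ⟨v, rfl, -⟩
    swap
    · exact absurd ⟨v, rfl⟩ e1
    rcases hw with ⟨c, d, rfl, h', -⟩ | ⟨v, rfl, -⟩
    swap
    · exact absurd ⟨v, rfl⟩ e2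
    rw [itemK_adj D h] at hpz
    rw [itemK_adj D h'] at hpw
    obtain ⟨u, ⟨hu1, hu2⟩, hu⟩ := hcross a b c d h h' hzw ⟨hpz, hpw⟩
    refine ⟨u, ?_, ?_, hu.symm⟩
    · simpa using hu1
    · simpa using hu2

/-! ### Columns -/

/-- The combinatorial data of the visibility representation. -/
theorem exists_columns (hconn : G.Connected) (D : PolylineDrawing G) (hpl : D.IsPlanar)
    (hmono : D.IsYMonotone) : ∃ (g : Sym2 V → ℕ) (l r : V → ℕ),
    (∀ v, l v ≤ r v) ∧ (∀ v, r v < max (Fintype.card V) G.edgeFinset.card) ∧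
    (∀ u v, G.Adj u v → (D.pos u).2 ≠ (D.pos v).2 →
      g s(u, v) < max (Fintype.card V) G.edgeFinset.card) ∧
    -- columns of edges are distinct
    (∀ u v x y, G.Adj u v → (D.pos u).2 ≠ (D.pos v).2 → G.Adj x y → (D.pos x).2 ≠ (D.pos y).2 →
      g s(u, v) = g s(x, y) → s(u, v) = s(x, y)) ∧
    -- columns of edges belong to the intervals of their endpoints
    (∀ u v, G.Adj u v → (D.pos u).2 ≠ (D.pos v).2 → l u ≤ g s(u, v) ∧ g s(u, v) ≤ r u) ∧
    -- vertices of a row are in order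
    (∀ u v, (D.pos u).2 = (D.pos v).2 → (D.pos u).1 < (D.pos v).1 → r u < l v) ∧
    -- edges avoid the other vertices
    (∀ u v w, G.Adj u v → (D.pos u).2 ≠ (D.pos v).2 → w ≠ u → w ≠ v →
      min (D.pos u).2 (D.pos v).2 ≤ (D.pos w).2 → (D.pos w).2 ≤ max (D.pos u).2 (D.pos v).2 →
      g s(u, v) < l w ∨ r w < g s(u, v)) ∧
    -- horizontal edges see each other
    (∀ u v x y, G.Adj u v → (D.pos u).2 ≠ (D.pos v).2 → G.Adj x y → (D.pos x).2 = (D.pos y).2 →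
      (D.pos x).1 < (D.pos y).1 → x ≠ u → x ≠ v → y ≠ u → y ≠ v →
      min (D.pos u).2 (D.pos v).2 ≤ (D.pos x).2 → (D.pos x).2 ≤ max (D.pos u).2 (D.pos v).2 →
      g s(u, v) < l x ∨ r y < g s(u, v)) := by
  classical
  have H := items D hpl hmono
  obtain ⟨g, ginj, glt, gmono⟩ := H.columns
  have hcard := card_itemSet D hconn
  have hne : ∀ v, ((itemSet D).filter (fun z => v ∈ z)).Nonempty := by
    intro v
    by_cases hv : Lone D v
    · exact ⟨s(v, v), by rw [Finset.mem_filter, mem_itemSet]; exact ⟨Or.inr ⟨v, rfl, hv⟩, by simp⟩⟩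
    · unfold Lone at hv
      push Not at hv
      obtain ⟨w, h, h'⟩ := hv
      exact ⟨s(v, w), by
        rw [Finset.mem_filter, mem_itemSet]
        exact ⟨Or.inl ⟨v, w, rfl, h, h'.symm⟩, by simp⟩⟩
  have hl : ∀ v, ∃ a ∈ itemSet D, v ∈ a ∧ ∀ b ∈ itemSet D, v ∈ b → g a ≤ g b := by
    intro v
    obtain ⟨a, ha, h⟩ := Finset.exists_min_image _ g (hne v)
    simp only [Finset.mem_filter] at ha h
    exact ⟨a, ha.1, ha.2, fun b hb hvb => h b ⟨hb, hvb⟩⟩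
  have hr : ∀ v, ∃ a ∈ itemSet D, v ∈ a ∧ ∀ b ∈ itemSet D, v ∈ b → g b ≤ g a := by
    intro v
    obtain ⟨a, ha, h⟩ := Finset.exists_max_image _ g (hne v)
    simp only [Finset.mem_filter] at ha h
    exact ⟨a, ha.1, ha.2, fun b hb hvb => h b ⟨hb, hvb⟩⟩
  choose L hL1 hL2 hL3 using hl
  choose R hR1 hR2 hR3 using hr
  have hmem : ∀ u v, G.Adj u v → (D.pos u).2 ≠ (D.pos v).2 → s(u, v) ∈ itemSet D :=
    fun u v h h' => (mem_itemSet D _).2 (Or.inl ⟨u, v, rfl, h, h'⟩)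
  refine ⟨g, fun v => g (L v), fun v => g (R v), ?_, ?_, ?_, ?_, ?_, ?_, ?_, ?_⟩
  · intro v; exact hL3 v _ (hR1 v) (hR2 v)
  · intro v; exact (glt _ (hR1 v)).trans_le hcard
  · intro u v h h'; exact (glt _ (hmem u v h h')).trans_le hcard
  · intro u v x y h h' k k' e
    exact ginj (hmem u v h h') (hmem x y k k') e
  · intro u v h h'
    exact ⟨hL3 u _ (hmem u v h h') (by simp), hR3 u _ (hmem u v h h') (by simp)⟩
  · intro u v h h'
    apply gmono _ (hR1 u) _ (hL1 v)
    have hv : v ∉ R u := by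
      intro hv
      have := H.ends _ (hR1 u) u (hR2 u) v hv h
      subst this
      exact lt_irrefl _ h'
    refine H.left_of_vertex (hR1 u) (hL1 v) hv (hL2 v) (p := (D.pos u).1) ?_ h'
    rw [← h]
    exact H.pos_mem _ (hR1 u) u (hR2 u)
  · intro u v w h h' h1 h2 h3 h4
    have hz := hmem u v h h'
    have hw : w ∉ s(u, v) := by simp [h1, h2]
    obtain ⟨p, hp⟩ := (H.alive _ hz (D.pos w).2).2 ⟨h3, h4⟩
    rcases lt_trichotomy p (D.pos w).1 with hlt | heq | hlt
    · left
      exact gmono _ hz _ (hL1 w) (H.left_of_vertex hz (hL1 w) hw (hL2 w) hp hlt)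
    · subst heq
      exact absurd hp (H.vert _ hz w hw)
    · right
      exact gmono _ (hR1 w) _ hz (H.right_of_vertex hz (hR1 w) hw (hR2 w) hp hlt)
  · intro u v x y h h' k k' hxy n1 n2 n3 n4 h3 h4
    have hz := hmem u v h h'
    have hx : x ∉ s(u, v) := by simp [n1, n2]
    have hy : y ∉ s(u, v) := by simp [n3, n4]
    obtain ⟨p, hp⟩ := (H.alive _ hz (D.pos x).2).2 ⟨h3, h4⟩
    rcases lt_or_ge p (D.pos x).1 with hlt | hge
    · left
      exact gmono _ hz _ (hL1 x) (H.left_of_vertex hz (hL1 x) hx (hL2 x) hp hlt)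
    rcases lt_or_ge (D.pos y).1 p with hlt | hge'
    · right
      exact gmono _ (hR1 y) _ hz (H.right_of_vertex hz (hR1 y) hy (hR2 y) (k' ▸ hp) hlt)
    exfalso
    obtain ⟨c1, c2, -, -, c3, -⟩ := curve_props D hmono x y k
    have hpc : (p, (D.pos x).2) ∈ D.curve x y :=
      c3 _ (D.pos x).1 (D.pos y).1 p c1 (by rw [k']; exact c2) hge hge'
    rw [itemK_adj D h] at hp
    obtain ⟨w, ⟨hw1, hw2⟩, -⟩ := hpl.2.2.2 u v x y h k (by
      intro e
      exact hx (e ▸ by simp)) ⟨hp, hpc⟩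
    simp only [Set.mem_insert_iff, Set.mem_singleton_iff] at hw1 hw2
    rcases hw1 with rfl | rfl <;> rcases hw2 with rfl | rfl <;> simp_all

end concrete

end FlatVR

/-- If a connected finite simple graph `G` with `n` vertices and `m`
edges has a planar y-monotone poly-line drawing `D` with `b` bends in total, then `G`
has a planar flat visibility representation with the same y-coordinates as `D` (in
particular of the same height) and width at most `max (n + b) (m + b)`. -/
theorem yMonotonePolyline_to_flatVR_width {V : Type} [Fintype V] [DecidableEq V]
    (G : SimpleGraph V) [DecidableRel G.Adj] (hconn : G.Connected)
    (D : PolylineDrawing G) (hpl : D.IsPlanar) (hint : D.IntCoords)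
    (hmono : D.IsYMonotone) :
    ∃ D' : OrthDrawing G, D'.IsPlanar ∧ D'.IsFlat ∧ D'.IsVR ∧ D'.IntCoords ∧
      (∀ v, (D'.box v).y1 = (D.pos v).2) ∧
      (∀ h : ℕ, D.InHeight h ↔ D'.InHeight h) ∧
      D'.InWidth (max (Fintype.card V + D.bendCount)
        (G.edgeFinset.card + D.bendCount)) := by
  classical
  obtain ⟨g, l, r, hlr, hrW, hgW, hginj, hgm, hord, havoid, hsee⟩ :=
    FlatVR.exists_columns hconn D hpl hmono
  have hW : max (Fintype.card V) G.edgeFinset.card ≤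
      max (Fintype.card V + D.bendCount) (G.edgeFinset.card + D.bendCount) :=
    max_le_max (Nat.le_add_right _ _) (Nat.le_add_right _ _)
  set W := max (Fintype.card V + D.bendCount) (G.edgeFinset.card + D.bendCount) with hWdef
  -- attachment points
  set col : V → V → ℕ := fun u v =>
    if (D.pos u).2 = (D.pos v).2 then (if (D.pos u).1 < (D.pos v).1 then r u else l u)
    else g s(u, v) with hcol
  set att : V → V → Pt := fun u v => ((col u v : ℝ), (D.pos u).2) with hatt
  have attV : ∀ u v, (D.pos u).2 ≠ (D.pos v).2 → att u v = ((g s(u, v) : ℝ), (D.pos u).2) := by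
    intro u v h; simp only [hatt, hcol, if_neg h]
  have attL : ∀ u v, (D.pos u).2 = (D.pos v).2 → (D.pos u).1 < (D.pos v).1 →
      att u v = ((r u : ℝ), (D.pos u).2) := by
    intro u v h h'; simp only [hatt, hcol, if_pos h, if_pos h']
  have attR : ∀ u v, (D.pos u).2 = (D.pos v).2 → (D.pos u).1 < (D.pos v).1 →
      att v u = ((l v : ℝ), (D.pos v).2) := by
    intro u v h h'; simp only [hatt, hcol, if_pos h.symm, if_neg (not_lt.2 h'.le)]
  have hposne : ∀ u v, u ≠ v → (D.pos u).2 = (D.pos v).2 → (D.pos u).1 ≠ (D.pos v).1 :=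
    fun u v h h1 h2 => h (hpl.1 (Prod.ext h2 h1))
  have hcolW : ∀ u v, G.Adj u v → col u v < W := by
    intro u v h
    simp only [hcol]
    split_ifs with h1 h2
    · exact (hrW u).trans_le hW
    · exact ((hlr u).trans_lt (hrW u)).trans_le hW
    · exact (hgW u v h h1).trans_le hW
  have hcolI : ∀ u v, G.Adj u v → l u ≤ col u v ∧ col u v ≤ r u := by
    intro u v h
    simp only [hcol]
    split_ifs with h1 h2
    · exact ⟨hlr u, le_rfl⟩
    · exact ⟨le_rfl, hlr u⟩
    · exact hgm u v h h1
  -- real versions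
  have hlr' : ∀ v, (l v : ℝ) ≤ r v := fun v => by exact_mod_cast hlr v
  have hord' : ∀ u v, (D.pos u).2 = (D.pos v).2 → (D.pos u).1 < (D.pos v).1 →
      (r u : ℝ) < l v := fun u v h h' => by exact_mod_cast hord u v h h'
  have hgm' : ∀ u v, G.Adj u v → (D.pos u).2 ≠ (D.pos v).2 →
      (l u : ℝ) ≤ g s(u, v) ∧ (g s(u, v) : ℝ) ≤ r u := fun u v h h' => by
    exact_mod_cast hgm u v h h'
  have hgm2 : ∀ u v, G.Adj u v → (D.pos u).2 ≠ (D.pos v).2 →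
      (l v : ℝ) ≤ g s(u, v) ∧ (g s(u, v) : ℝ) ≤ r v := fun u v h h' => by
    rw [Sym2.eq_swap]; exact hgm' v u h.symm h'.symm
  have attV2 : ∀ u v, (D.pos u).2 ≠ (D.pos v).2 → att v u = ((g s(u, v) : ℝ), (D.pos v).2) := by
    intro u v h; rw [Sym2.eq_swap]; exact attV v u h.symm
  -- nothing lies between the ends of a horizontal edge
  have hbetween : ∀ u v w, G.Adj u v → (D.pos u).2 = (D.pos v).2 → (D.pos u).1 < (D.pos v).1 →
      (D.pos w).2 = (D.pos u).2 → (D.pos w).1 ≤ (D.pos u).1 ∨ (D.pos v).1 ≤ (D.pos w).1 := by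
    intro u v w h h1 h2 h3
    by_contra hcon
    push Not at hcon
    obtain ⟨c1, c2, -, -, c3, -⟩ := FlatVR.curve_props D hmono u v h
    have hw := c3 (D.pos u).2 (D.pos u).1 (D.pos v).1 (D.pos w).1 c1 (by rw [h1]; exact c2)
      hcon.1.le hcon.2.le
    rw [← h3] at hw
    refine hpl.2.2.1 u v w h ?_ ?_ hw
    · rintro rfl; exact lt_irrefl _ hcon.1
    · rintro rfl; exact lt_irrefl _ hcon.2
  -- description of the curves
  have segV : ∀ u v, (D.pos u).2 ≠ (D.pos v).2 → ∀ p ∈ segment ℝ (att u v) (att v u),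
      p.1 = g s(u, v) ∧ min (D.pos u).2 (D.pos v).2 ≤ p.2 ∧
        p.2 ≤ max (D.pos u).2 (D.pos v).2 := by
    intro u v h p hp
    rw [attV u v h, attV2 u v h, ← Prod.image_mk_segment_right] at hp
    obtain ⟨y, hy, rfl⟩ := hp
    rw [segment_eq_uIcc] at hy
    exact ⟨rfl, hy.1, hy.2⟩
  have segH : ∀ u v, (D.pos u).2 = (D.pos v).2 → (D.pos u).1 < (D.pos v).1 →
      ∀ p ∈ segment ℝ (att u v) (att v u),
      p.2 = (D.pos u).2 ∧ (r u : ℝ) ≤ p.1 ∧ p.1 ≤ l v := by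
    intro u v h h' p hp
    rw [attL u v h h', attR u v h h', ← h, ← Prod.image_mk_segment_left] at hp
    obtain ⟨x, hx, rfl⟩ := hp
    rw [segment_eq_Icc (hord' u v h h').le] at hx
    exact ⟨rfl, hx.1, hx.2⟩
  have hattne : ∀ u v, G.Adj u v → att u v ≠ att v u := by
    have key : ∀ u v, (D.pos u).2 = (D.pos v).2 → (D.pos u).1 < (D.pos v).1 →
        att u v ≠ att v u := by
      intro u v h h' e
      rw [attL u v h h', attR u v h h'] at e
      exact (hord' u v h h').ne (congrArg Prod.fst e)
    intro u v h
    by_cases h1 : (D.pos u).2 = (D.pos v).2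
    · rcases lt_or_gt_of_ne (hposne u v h.ne h1) with h2 | h2
      · exact key u v h1 h2
      · exact (key v u h1.symm h2).symm
    · intro e
      have e2 : (att u v).2 = (att v u).2 := by rw [e]
      exact h1 e2
  -- edges against vertices
  have hEV : ∀ u v w, G.Adj u v → ∀ p ∈ segment ℝ (att u v) (att v u),
      p.2 = (D.pos w).2 → (l w : ℝ) ≤ p.1 → p.1 ≤ r w →
      (w = u ∧ p = att u v) ∨ (w = v ∧ p = att v u) := by
    have key : ∀ u v w, G.Adj u v → (D.pos u).2 = (D.pos v).2 → (D.pos u).1 < (D.pos v).1 →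
        ∀ p ∈ segment ℝ (att u v) (att v u),
        p.2 = (D.pos w).2 → (l w : ℝ) ≤ p.1 → p.1 ≤ r w →
        (w = u ∧ p = att u v) ∨ (w = v ∧ p = att v u) := by
      intro u v w h h1 h2 p hp e1 e2 e3
      obtain ⟨s1, s2, s3⟩ := segH u v h1 h2 p hp
      by_cases hwu : w = u
      · subst hwu
        exact Or.inl ⟨rfl, by rw [attL w v h1 h2]; exact Prod.ext (le_antisymm e3 s2) s1⟩
      by_cases hwv : w = v
      · subst hwv
        exact Or.inr ⟨rfl, by rw [attR u w h1 h2]; exact Prod.ext (le_antisymm s3 e2) e1⟩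
      exfalso
      have hyu : (D.pos w).2 = (D.pos u).2 := e1.symm.trans s1
      have hyv : (D.pos v).2 = (D.pos w).2 := h1.symm.trans hyu.symm
      rcases hbetween u v w h h1 h2 hyu with hb | hb
      · have := hord' w u hyu (lt_of_le_of_ne hb (hposne w u hwu hyu))
        linarith [hlr' u]
      · have := hord' v w hyv (lt_of_le_of_ne hb (hposne v w (Ne.symm hwv) hyv))
        linarith [hlr' v]
    intro u v w h p hp e1 e2 e3
    by_cases h1 : (D.pos u).2 = (D.pos v).2
    · rcases lt_or_gt_of_ne (hposne u v h.ne h1) with h2 | h2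
      · exact key u v w h h1 h2 p hp e1 e2 e3
      · rw [segment_symm] at hp
        exact (key v u w h.symm h1.symm h2 p hp e1 e2 e3).symm
    · obtain ⟨s1, s2, s3⟩ := segV u v h1 p hp
      by_cases hwu : w = u
      · subst hwu
        exact Or.inl ⟨rfl, by rw [attV w v h1]; exact Prod.ext s1 e1⟩
      by_cases hwv : w = v
      · subst hwv
        exact Or.inr ⟨rfl, by rw [attV2 u w h1]; exact Prod.ext s1 e1⟩
      exfalso
      rw [e1] at s2 s3
      rw [s1] at e2 e3
      have e2' : l w ≤ g s(u, v) := by exact_mod_cast e2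
      have e3' : g s(u, v) ≤ r w := by exact_mod_cast e3
      rcases havoid u v w h h1 hwu hwv s2 s3 with hh | hh <;> omega
  -- edges against edges
  have hVH : ∀ u v x y, G.Adj u v → G.Adj x y → (D.pos u).2 ≠ (D.pos v).2 →
      (D.pos x).2 = (D.pos y).2 → (D.pos x).1 < (D.pos y).1 →
      ∀ p ∈ segment ℝ (att u v) (att v u), p ∈ segment ℝ (att x y) (att y x) →
      (p = att u v ∨ p = att v u) ∧ (p = att x y ∨ p = att y x) := by
    intro u v x y h k h1 k1 k2 p hp hp'
    obtain ⟨s1, s2, s3⟩ := segV u v h1 p hp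
    obtain ⟨t1, t2, t3⟩ := segH x y k1 k2 p hp'
    rw [attV u v h1, attV2 u v h1, attL x y k1 k2, attR x y k1 k2]
    have gu := hgm' u v h h1
    have gv := hgm2 u v h h1
    by_cases c1 : x = u
    · subst c1
      exact ⟨Or.inl (Prod.ext s1 t1), Or.inl (Prod.ext (by simp only; linarith) t1)⟩
    by_cases c2 : x = v
    · subst c2
      exact ⟨Or.inr (Prod.ext s1 t1), Or.inl (Prod.ext (by simp only; linarith) t1)⟩
    have t1' := t1.trans k1
    by_cases c3 : y = u
    · subst c3
      exact ⟨Or.inl (Prod.ext s1 t1'), Or.inr (Prod.ext (by simp only; linarith) t1')⟩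
    by_cases c4 : y = v
    · subst c4
      exact ⟨Or.inr (Prod.ext s1 t1'), Or.inr (Prod.ext (by simp only; linarith) t1')⟩
    exfalso
    rw [t1] at s2 s3
    rcases hsee u v x y h h1 k k1 k2 c1 c2 c3 c4 s2 s3 with hh | hh
    · have : (g s(u, v) : ℝ) < l x := by exact_mod_cast hh
      linarith [hlr' x]
    · have : (r y : ℝ) < g s(u, v) := by exact_mod_cast hh
      linarith [hlr' y]
  have hHH : ∀ u v x y, G.Adj u v → G.Adj x y → s(u, v) ≠ s(x, y) →
      (D.pos u).2 = (D.pos v).2 → (D.pos u).1 < (D.pos v).1 →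
      (D.pos x).2 = (D.pos y).2 → (D.pos x).1 < (D.pos y).1 →
      ∀ p ∈ segment ℝ (att u v) (att v u), p ∈ segment ℝ (att x y) (att y x) →
      (p = att u v ∨ p = att v u) ∧ (p = att x y ∨ p = att y x) := by
    -- the first edge is left of the second one
    have key : ∀ u v x y, (D.pos u).2 = (D.pos v).2 → (D.pos u).1 < (D.pos v).1 →
        (D.pos x).2 = (D.pos y).2 → (D.pos x).1 < (D.pos y).1 → (D.pos v).2 = (D.pos x).2 →
        (D.pos v).1 ≤ (D.pos x).1 →
        ∀ p ∈ segment ℝ (att u v) (att v u), p ∈ segment ℝ (att x y) (att y x) →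
        p = att v u ∧ p = att x y := by
      intro u v x y h1 h2 k1 k2 hr hle p hp hp'
      obtain ⟨s1, s2, s3⟩ := segH u v h1 h2 p hp
      obtain ⟨t1, t2, t3⟩ := segH x y k1 k2 p hp'
      rw [attR u v h1 h2, attL x y k1 k2]
      rcases hle.lt_or_eq with hlt | heq
      · have := hord' v x hr hlt
        linarith [hlr' v, hlr' x]
      · have : v = x := hpl.1 (Prod.ext heq hr)
        subst this
        have := hlr' v
        exact ⟨Prod.ext (by simp only; linarith) t1, Prod.ext (by simp only; linarith) t1⟩
    intro u v x y h k hne h1 h2 k1 k2 p hp hp'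
    have hrow : (D.pos u).2 = (D.pos x).2 := by
      rw [← (segH u v h1 h2 p hp).1, (segH x y k1 k2 p hp').1]
    rcases le_or_gt (D.pos v).1 (D.pos x).1 with c | c
    · have := key u v x y h1 h2 k1 k2 (h1.symm.trans hrow) c p hp hp'
      exact ⟨Or.inr this.1, Or.inl this.2⟩
    rcases le_or_gt (D.pos y).1 (D.pos u).1 with c' | c'
    · have := key x y u v k1 k2 h1 h2 (k1.symm.trans hrow.symm) c' p hp' hp
      exact ⟨Or.inl this.2, Or.inr this.1⟩
    exfalso
    have b1 := hbetween u v x h h1 h2 hrow.symm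
    have b2 := hbetween u v y h h1 h2 (k1.symm.trans hrow.symm)
    have b3 := hbetween x y u k k1 k2 hrow
    have b4 := hbetween x y v k k1 k2 (h1.symm.trans hrow)
    have e1 : (D.pos x).1 = (D.pos u).1 := by
      rcases b1 with b1 | b1
      · rcases b3 with b3 | b3
        · exact le_antisymm b1 b3
        · linarith
      · linarith
    have e2 : (D.pos y).1 = (D.pos v).1 := by
      rcases b2 with b2 | b2
      · linarith
      · rcases b4 with b4 | b4
        · linarith
        · exact le_antisymm b4 b2
    have f1 : u = x := hpl.1 (Prod.ext e1.symm hrow)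
    have f2 : v = y := hpl.1 (Prod.ext e2.symm (h1.symm.trans (hrow.trans k1)))
    exact hne (by rw [f1, f2])
  have hEE : ∀ u v x y, G.Adj u v → G.Adj x y → s(u, v) ≠ s(x, y) →
      ∀ p ∈ segment ℝ (att u v) (att v u), p ∈ segment ℝ (att x y) (att y x) →
      (p = att u v ∨ p = att v u) ∧ (p = att x y ∨ p = att y x) := by
    have keyV : ∀ u v x y, G.Adj u v → G.Adj x y → s(u, v) ≠ s(x, y) →
        (D.pos u).2 ≠ (D.pos v).2 →
        ∀ p ∈ segment ℝ (att u v) (att v u), p ∈ segment ℝ (att x y) (att y x) →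
        (p = att u v ∨ p = att v u) ∧ (p = att x y ∨ p = att y x) := by
      intro u v x y h k hne h1 p hp hp'
      by_cases k1 : (D.pos x).2 = (D.pos y).2
      · rcases lt_or_gt_of_ne (hposne x y k.ne k1) with k2 | k2
        · exact hVH u v x y h k h1 k1 k2 p hp hp'
        · rw [segment_symm] at hp'
          exact (hVH u v y x h k.symm h1 k1.symm k2 p hp hp').imp id Or.symm
      · exfalso
        apply hne
        apply hginj u v x y h h1 k k1
        have e1 := (segV u v h1 p hp).1
        have e2 := (segV x y k1 p hp').1
        exact_mod_cast e1.symm.trans e2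
    have keyH : ∀ u v x y, G.Adj u v → G.Adj x y → s(u, v) ≠ s(x, y) →
        (D.pos u).2 = (D.pos v).2 → (D.pos u).1 < (D.pos v).1 →
        ∀ p ∈ segment ℝ (att u v) (att v u), p ∈ segment ℝ (att x y) (att y x) →
        (p = att u v ∨ p = att v u) ∧ (p = att x y ∨ p = att y x) := by
      intro u v x y h k hne h1 h2 p hp hp'
      by_cases k1 : (D.pos x).2 = (D.pos y).2
      · rcases lt_or_gt_of_ne (hposne x y k.ne k1) with k2 | k2
        · exact hHH u v x y h k hne h1 h2 k1 k2 p hp hp'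
        · rw [segment_symm] at hp'
          rw [Sym2.eq_swap (a := x)] at hne
          exact (hHH u v y x h k.symm hne h1 h2 k1.symm k2 p hp hp').imp id Or.symm
      · exact (keyV x y u v k h hne.symm k1 p hp' hp).symm
    intro u v x y h k hne p hp hp'
    by_cases h1 : (D.pos u).2 = (D.pos v).2
    · rcases lt_or_gt_of_ne (hposne u v h.ne h1) with h2 | h2
      · exact keyH u v x y h k hne h1 h2 p hp hp'
      · rw [segment_symm] at hp
        rw [Sym2.eq_swap (a := u)] at hne
        exact (keyH v u x y h.symm k hne h1.symm h2 p hp hp').imp Or.symm id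
    · exact keyV u v x y h k hne h1 p hp hp'
  let D' : OrthDrawing G :=
    { box := fun v => ⟨l v, r v, (D.pos v).2, (D.pos v).2, hlr' v, le_rfl⟩
      chain := fun u v => [att u v, att v u]
      chain_symm := fun u v => by simp }
  have hcurve : ∀ u v, D'.curve u v = segment ℝ (att u v) (att v u) := by
    intro u v
    simp [OrthDrawing.curve, D', chainSet, chainSegs]
  have hbox : ∀ v (p : Pt), p ∈ (D'.box v).pts ↔
      (((l v : ℝ) ≤ p.1 ∧ p.1 ≤ r v) ∧ p.2 = (D.pos v).2) := by
    intro v p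
    simp only [Box.pts, D', Set.mem_prod, Set.mem_Icc]
    constructor
    · rintro ⟨h1, h2, h3⟩; exact ⟨h1, le_antisymm h3 h2⟩
    · rintro ⟨h1, h2⟩; exact ⟨h1, h2.ge, h2.le⟩
  have hpts : ∀ p ∈ D'.points, ∃ (n : ℕ) (v : V), p = ((n : ℝ), (D.pos v).2) ∧ n < W := by
    intro p hp
    rcases hp with hp | hp
    · simp only [Set.mem_iUnion] at hp
      obtain ⟨v, hp⟩ := hp
      simp only [D', Set.mem_insert_iff, Set.mem_singleton_iff] at hp
      have e1 : r v < W := (hrW v).trans_le hW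
      have e2 : l v < W := (hlr v).trans_lt e1
      rcases hp with rfl | rfl | rfl | rfl
      · exact ⟨l v, v, rfl, e2⟩
      · exact ⟨l v, v, rfl, e2⟩
      · exact ⟨r v, v, rfl, e1⟩
      · exact ⟨r v, v, rfl, e1⟩
    · simp only [Set.mem_iUnion] at hp
      obtain ⟨u, v, h, hp⟩ := hp
      have hp : p ∈ [att u v, att v u] := hp
      simp only [List.mem_cons, List.not_mem_nil, or_false] at hp
      rcases hp with rfl | rfl
      · exact ⟨col u v, u, rfl, hcolW u v h⟩
      · exact ⟨col v u, v, rfl, hcolW v u h.symm⟩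
  have hbpt : ∀ v, ((l v : ℝ), (D.pos v).2) ∈ D'.points := by
    intro v
    refine Or.inl ?_
    simp only [Set.mem_iUnion]
    exact ⟨v, Or.inl rfl⟩
  have hpp : ∀ v, D.pos v ∈ D.points := fun v => Or.inl ⟨v, rfl⟩
  have hDpts : ∀ p ∈ D.points, ∃ u v, (D.pos u).2 ≤ p.2 ∧ p.2 ≤ (D.pos v).2 := by
    intro p hp
    rcases hp with ⟨v, rfl⟩ | hp
    · exact ⟨v, v, le_rfl, le_rfl⟩
    · simp only [Set.mem_iUnion] at hp
      obtain ⟨u, v, h, hp⟩ := hp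
      obtain ⟨-, -, c1, -, -, c2⟩ := FlatVR.curve_props D hmono u v h
      obtain ⟨h1, h2⟩ := (c2 p.2).1 ⟨p.1, c1 p hp⟩
      rcases le_total (D.pos u).2 (D.pos v).2 with hle | hle
      · rw [min_eq_left hle] at h1
        rw [max_eq_right hle] at h2
        exact ⟨u, v, h1, h2⟩
      · rw [min_eq_right hle] at h1
        rw [max_eq_left hle] at h2
        exact ⟨v, u, h1, h2⟩
  refine ⟨D', ⟨?_, ?_, ?_, ?_, ?_⟩, fun v => rfl, fun u v _ => rfl, ?_, fun v => rfl, ?_, ?_⟩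
  · intro u v huv
    rw [Set.disjoint_left]
    intro p hu hv
    rw [hbox] at hu hv
    have hrow := hu.2.symm.trans hv.2
    rcases lt_or_gt_of_ne (hposne u v huv hrow) with hh | hh
    · have := hord' u v hrow hh
      linarith [hu.1.2, hv.1.1]
    · have := hord' v u hrow.symm hh
      linarith [hv.1.2, hu.1.1]
  · intro u v h
    refine ⟨⟨by simp [D'], by simp [D', hattne u v h], ?_⟩, ?_, ?_⟩
    · intro i j hij hi hj
      have : (chainSegs (D'.chain u v)).length = 1 := by simp [D', chainSegs]
      omega
    · intro s hs
      have hs : s ∈ chainSegs [att u v, att v u] := hs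
      simp only [chainSegs, List.tail_cons, List.zip_cons_cons, List.zip_nil_right,
        List.mem_cons, List.not_mem_nil, or_false] at hs
      subst hs
      by_cases h1 : (D.pos u).2 = (D.pos v).2
      · exact Or.inr h1
      · left
        rw [attV u v h1, attV2 u v h1]
    · intro i hi
      have : (D'.chain u v).length = 2 := rfl
      omega
  · intro u v h
    refine ⟨att u v, att v u, [], rfl, ?_, ?_⟩
    · rw [hbox]
      have := hcolI u v h
      exact ⟨⟨Nat.cast_le.2 this.1, Nat.cast_le.2 this.2⟩, rfl⟩
    · rw [hbox]
      have := hcolI v u h.symm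
      exact ⟨⟨Nat.cast_le.2 this.1, Nat.cast_le.2 this.2⟩, rfl⟩
  · rintro u v w h p ⟨hp, hw⟩
    rw [hcurve] at hp
    rw [hbox] at hw
    rcases hEV u v w h p hp hw.2 hw.1.1 hw.1.2 with ⟨e, rfl⟩ | ⟨e, rfl⟩
    · exact Or.inl ⟨e, rfl⟩
    · exact Or.inr ⟨e, rfl⟩
  · rintro u v x y h k hne p ⟨hp, hp'⟩
    rw [hcurve] at hp hp'
    obtain ⟨e1, e2⟩ := hEE u v x y h k hne p hp hp'
    refine ⟨?_, ?_⟩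
    · rcases e1 with e | e
      · exact Or.inl (e ▸ rfl)
      · exact Or.inr (e ▸ rfl)
    · rcases e2 with e | e
      · exact Or.inl (e ▸ rfl)
      · exact Or.inr (e ▸ rfl)
  · intro p hp
    obtain ⟨n, v, rfl, -⟩ := hpts p hp
    exact ⟨⟨n, by simp⟩, (hint _ (hpp v)).2⟩
  · intro h
    constructor
    · rintro ⟨y0, hy⟩
      refine ⟨y0, fun p hp => ?_⟩
      obtain ⟨n, v, rfl, -⟩ := hpts p hp
      exact hy (D.pos v) (hpp v)
    · rintro ⟨y0, hy⟩
      refine ⟨y0, fun p hp => ?_⟩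
      obtain ⟨u, v, h1, h2⟩ := hDpts p hp
      have hu := (hy _ (hbpt u)).1
      have hv := (hy _ (hbpt v)).2
      simp only at hu hv
      exact ⟨hu.trans h1, h2.trans hv⟩
  · refine ⟨0, fun p hp => ?_⟩
    obtain ⟨n, v, rfl, hn⟩ := hpts p hp
    have : (n : ℝ) + 1 ≤ (W : ℝ) := by exact_mod_cast hn
    simp only [Int.cast_zero]
    exact ⟨Nat.cast_nonneg n, by linarith⟩
end

section
/- Let Γ be a flat orthogonal drawing of a finite simple planar graph G. Then there exists a poly-line drawing Γ' of G with the same y-coordinates as Γ, the same left-to-right order in each row, and width no larger than the width of Γ; moreover, if Γ is y-monotone then Γ' is y-monotone. In particular, Γ' has the same height as Γ. -/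
open Set

/-! ### Recursive versions of the chain notions -/

def rcs : List Pt → Set Pt
  | [] => ∅
  | [p] => {p}
  | p :: q :: l => segment ℝ p q ∪ rcs (q :: l)

def RSC : List Pt → Prop
  | [] => True
  | [_] => True
  | p :: q :: l => p ≠ q ∧ (∀ z ∈ segment ℝ p q, z ∈ rcs (q :: l) → z = q) ∧ RSC (q :: l)

def RGB : List Pt → Prop
  | [] => True
  | [_] => True
  | [_, _] => True
  | p :: q :: r :: t => ¬ Collinear ℝ ({p, q, r} : Set Pt) ∧ RGB (q :: r :: t)

lemma mem_rcs : ∀ (l : List Pt) (a : Pt), a ∈ l → a ∈ rcs l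
  | [], a, h => by simp at h
  | [p], a, h => by simpa [rcs] using h
  | p :: q :: l, a, h => by
    rw [List.mem_cons] at h
    rcases h with rfl | h
    · exact Or.inl (left_mem_segment ℝ _ _)
    · exact Or.inr (mem_rcs (q :: l) a h)

lemma chainSet_cons (p q : Pt) (l : List Pt) :
    chainSet (p :: q :: l) = segment ℝ p q ∪ chainSet (q :: l) := by
  have : chainSegs (p :: q :: l) = (p, q) :: chainSegs (q :: l) := rfl
  simp [chainSet, this]

lemma chainSet_eq_rcs : ∀ l : List Pt, 2 ≤ l.length → chainSet l = rcs l
  | [], h => by simp at h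
  | [p], h => by simp at h
  | [p, q], _ => by
    rw [chainSet_cons]
    have := right_mem_segment ℝ p q
    simp [rcs, chainSet, chainSegs, this]
  | p :: q :: r :: l, _ => by
    rw [chainSet_cons, chainSet_eq_rcs (q :: r :: l) (by simp)]
    rfl

lemma rcs_idx : ∀ (l : List Pt) (z : Pt), 2 ≤ l.length → z ∈ rcs l →
    ∃ (j : ℕ) (h : j + 1 < l.length), z ∈ segment ℝ l[j] l[j+1]
  | [], z, h, _ => by simp at h
  | [p], z, h, _ => by simp at h
  | [p, q], z, _, hz => by
    refine ⟨0, by simp, ?_⟩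
    rcases hz with hz | hz
    · exact hz
    · simp only [rcs, Set.mem_singleton_iff] at hz
      subst hz; exact right_mem_segment ℝ _ _
  | p :: q :: r :: l, z, _, hz => by
    rcases hz with hz | hz
    · exact ⟨0, by simp, hz⟩
    · obtain ⟨j, h, hj⟩ := rcs_idx (q :: r :: l) z (by simp) hz
      exact ⟨j + 1, by simpa using h, by simpa using hj⟩

lemma idx_rcs : ∀ (l : List Pt) (z : Pt) (j : ℕ) (h : j + 1 < l.length),
    z ∈ segment ℝ l[j] l[j+1] → z ∈ rcs l
  | [], z, j, h, _ => by simp at h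
  | [p], z, j, h, _ => by simp at h
  | p :: q :: l, z, 0, _, hz => Or.inl hz
  | p :: q :: l, z, j + 1, h, hz =>
    Or.inr (idx_rcs (q :: l) z j (by simpa using h) (by simpa using hz))

def ISC (l : List Pt) : Prop :=
  2 ≤ l.length ∧ l.Nodup ∧ ∀ (i j : ℕ) (hij : i < j) (hj : j + 1 < l.length) (z : Pt),
    z ∈ segment ℝ l[i] l[i+1] → z ∈ segment ℝ l[j] l[j+1] → j = i + 1 ∧ z = l[j]

lemma isSimple_iff (l : List Pt) : IsSimpleChain l ↔ ISC l := by
  have hlen : (chainSegs l).length = l.length - 1 := by simp [chainSegs]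
  unfold IsSimpleChain ISC
  refine and_congr_right fun h2 => and_congr_right fun hn => ?_
  constructor
  · intro H i j hij hj z hz1 hz2
    have := H i j hij (by omega) (by omega)
      (show z ∈ _ ∩ _ from ⟨by simpa [chainSegs] using hz1, by simpa [chainSegs] using hz2⟩)
    split_ifs at this with h
    · exact ⟨h, by simpa [chainSegs] using this⟩
    · exact absurd this (by simp)
  · intro H i j hij hi hj z hz
    obtain ⟨hz1, hz2⟩ := hz
    obtain ⟨h, h'⟩ := H i j hij (by omega) z (by simpa [chainSegs] using hz1)
      (by simpa [chainSegs] using hz2)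
    rw [if_pos h]
    simpa [chainSegs] using h'

lemma RSC_nodup : ∀ l : List Pt, RSC l → l.Nodup
  | [], _ => by simp
  | [p], _ => by simp
  | p :: q :: t, h => by
    obtain ⟨h1, h2, h3⟩ := h
    rw [List.nodup_cons]
    refine ⟨fun hp => h1 (h2 p (left_mem_segment ℝ _ _) (mem_rcs _ _ hp)), RSC_nodup _ h3⟩

lemma RSC_idx : ∀ l : List Pt, RSC l → ∀ (i j : ℕ) (hij : i < j) (hj : j + 1 < l.length) (z : Pt),
    z ∈ segment ℝ l[i] l[i+1] → z ∈ segment ℝ l[j] l[j+1] → j = i + 1 ∧ z = l[j]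
  | [], _ => by intro i j hij hj; simp at hj
  | [p], _ => by intro i j hij hj; simp at hj
  | p :: q :: t, h => by
    obtain ⟨h1, h2, h3⟩ := h
    intro i j hij hj z hz1 hz2
    obtain ⟨j, rfl⟩ : ∃ k, j = k + 1 := ⟨j - 1, by omega⟩
    have hj' : j + 1 < (q :: t).length := by simpa using hj
    have hz2' : z ∈ segment ℝ (q :: t)[j] (q :: t)[j+1] := by simpa using hz2
    rcases i with _ | i
    · have hzq : z = q := h2 z (by simpa using hz1) (idx_rcs _ _ j hj' hz2')
      rcases j with _ | j
      · exact ⟨rfl, by simpa using hzq⟩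
      · exfalso
        obtain ⟨e1, e2⟩ := RSC_idx (q :: t) h3 0 (j + 1) (by omega) hj' z
          (by rw [hzq]; exact left_mem_segment ℝ _ _) hz2'
        have hnd := RSC_nodup _ h3
        have := (List.Nodup.getElem_inj_iff hnd (i := 0) (j := j + 1) (hi := by simp)
          (hj := by omega)).1 (by rw [← e2, hzq]; rfl)
        omega
    · obtain ⟨e1, e2⟩ := RSC_idx (q :: t) h3 i j (by omega) hj' z (by simpa using hz1) hz2'
      exact ⟨by omega, by simpa using e2⟩

lemma ISC_RSC : ∀ l : List Pt, ISC l → RSC l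
  | [], _ => trivial
  | [p], _ => trivial
  | [p, q], h => by
    obtain ⟨_, hn, _⟩ := h
    refine ⟨by simpa using hn, ?_, trivial⟩
    intro z _ hz; simpa [rcs] using hz
  | p :: q :: r :: t, h => by
    obtain ⟨_, hn, H⟩ := h
    refine ⟨fun e => by simp [e] at hn, ?_, ?_⟩
    · intro z hz hz'
      obtain ⟨j, hj, hzj⟩ := rcs_idx _ z (by simp) hz'
      obtain ⟨e1, e2⟩ := H 0 (j + 1) (by omega) (by simpa using hj) z (by simpa using hz)
        (by simpa using hzj)
      obtain rfl : j = 0 := by omega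
      simpa using e2
    · refine ISC_RSC _ ⟨by simp, (List.nodup_cons.1 hn).2, ?_⟩
      intro i j hij hj z h1 h2
      obtain ⟨e1, e2⟩ := H (i + 1) (j + 1) (by omega) (by simpa using hj) z (by simpa using h1)
        (by simpa using h2)
      exact ⟨by omega, by simpa using e2⟩

lemma isSimple_RSC (l : List Pt) : IsSimpleChain l ↔ 2 ≤ l.length ∧ RSC l := by
  rw [isSimple_iff]
  exact ⟨fun h => ⟨h.1, ISC_RSC l h⟩, fun h => ⟨h.1, RSC_nodup l h.2, RSC_idx l h.2⟩⟩

lemma isSimple_reverse (l : List Pt) (h : IsSimpleChain l) : IsSimpleChain l.reverse := by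
  rw [isSimple_iff] at h ⊢
  obtain ⟨h1, h2, H⟩ := h
  refine ⟨by simpa using h1, by simpa using h2, ?_⟩
  intro i j hij hj z hz1 hz2
  simp only [List.length_reverse] at hj
  simp only [List.getElem_reverse] at hz1 hz2 ⊢
  rw [segment_symm] at hz1 hz2
  have a1 : l.length - 1 - i = l.length - 1 - (i + 1) + 1 := by omega
  have a2 : l.length - 1 - j = l.length - 1 - (j + 1) + 1 := by omega
  obtain ⟨e1, e2⟩ := H (l.length - 1 - (j + 1)) (l.length - 1 - (i + 1)) (by omega) (by omega) z
    (by simpa only [a2] using hz2) (by simpa only [a1] using hz1)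
  refine ⟨by omega, ?_⟩
  rw [e2]
  congr 1
  omega

lemma genuine_iff : ∀ l : List Pt, GenuineBends l ↔ RGB l
  | [] => by simp [GenuineBends, RGB]
  | [p] => by simp [GenuineBends, RGB]
  | [p, q] => by simp [GenuineBends, RGB]
  | p :: q :: r :: t => by
    rw [RGB, ← genuine_iff (q :: r :: t)]
    constructor
    · intro h
      refine ⟨h 0 (by simp), fun i hi => ?_⟩
      exact h (i + 1) (by simpa using hi)
    · rintro ⟨h1, h2⟩ i hi
      rcases i with _ | i
      · exact h1
      · exact h2 i (by simpa using hi)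

lemma genuine_reverse (l : List Pt) (h : GenuineBends l) : GenuineBends l.reverse := by
  intro i hi
  have hi' : i + 2 < l.length := by simpa using hi
  have := h (l.length - 1 - (i + 2)) (by omega)
  intro hc
  apply this
  simp only [List.get_eq_getElem, List.getElem_reverse] at hc ⊢
  have a1 : l.length - 1 - (i + 2) + 1 = l.length - 1 - (i + 1) := by omega
  have a2 : l.length - 1 - (i + 2) + 2 = l.length - 1 - i := by omega
  simp only [a1, a2]
  convert hc using 1
  ext x; simp; tauto

lemma chainSet_reverse_sub (l : List Pt) (hl : 2 ≤ l.length) :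
    chainSet l.reverse ⊆ chainSet l := by
  rw [chainSet_eq_rcs _ hl, chainSet_eq_rcs _ (by simpa using hl)]
  intro z hz
  obtain ⟨j, hj, hz⟩ := rcs_idx _ _ (by simpa using hl) hz
  simp only [List.length_reverse] at hj
  simp only [List.getElem_reverse] at hz
  rw [segment_symm] at hz
  have a2 : l.length - 1 - j = l.length - 1 - (j + 1) + 1 := by omega
  exact idx_rcs l z (l.length - 1 - (j + 1)) (by omega) (by simpa only [a2] using hz)

lemma mono_reverse (l : List Pt) (h : IsMonoChain l) : IsMonoChain l.reverse := by
  unfold IsMonoChain at *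
  rw [List.map_reverse]
  rcases h with h | h
  · right; exact List.isChain_reverse.2 h
  · left; exact List.isChain_reverse.2 h

/-! ### Removing flat corners -/

lemma segment_split {p q r : Pt} (h : q ∈ segment ℝ p r) :
    segment ℝ p r = segment ℝ p q ∪ segment ℝ q r := by
  apply Set.Subset.antisymm
  · rw [segment_eq_image'] at h
    obtain ⟨s, ⟨hs0, hs1⟩, rfl⟩ := h
    intro z hz
    rw [segment_eq_image'] at hz
    obtain ⟨t, ⟨ht0, ht1⟩, rfl⟩ := hz
    rcases le_total t s with hts | hts
    · left
      rw [segment_eq_image']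
      rcases eq_or_lt_of_le hs0 with h0 | h0
      · exact ⟨0, ⟨by simp, by simp⟩, by
          have : t = 0 := by linarith
          simp [this]⟩
      · refine ⟨t / s, ⟨by positivity, by rw [div_le_one h0]; exact hts⟩, ?_⟩
        simp only [add_sub_cancel_left, smul_smul]
        rw [div_mul_cancel₀ _ h0.ne']
    · right
      rw [segment_symm, segment_eq_image']
      rcases eq_or_lt_of_le hs1 with h0 | h0
      · exact ⟨0, ⟨by simp, by simp⟩, by
          have : t = 1 := by linarith
          simp [this]⟩
      · have h0' : 0 < 1 - s := by linarith
        refine ⟨(1 - t) / (1 - s), ⟨div_nonneg (by linarith) h0'.le,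
          by rw [div_le_one h0']; linarith⟩, ?_⟩
        have e : p + s • (r - p) - r = (1 - s) • (p - r) := by module
        simp only [e, smul_smul]
        rw [div_mul_cancel₀ _ h0'.ne']
        module
  · apply Set.union_subset
    · exact (convex_segment p r).segment_subset (left_mem_segment ℝ _ _) h
    · exact (convex_segment p r).segment_subset h (right_mem_segment ℝ _ _)

lemma remove_one : ∀ l : List Pt, RSC l → ¬ RGB l → ∃ l', RSC l' ∧ l'.Sublist l ∧
    l'.length < l.length ∧ l'.head? = l.head? ∧ l'.getLast? = l.getLast? ∧ rcs l' = rcs l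
  | [], _, h => by simp [RGB] at h
  | [p], _, h => by simp [RGB] at h
  | [p, q], _, h => by simp [RGB] at h
  | p :: q :: r :: t, hs, h => by
    obtain ⟨h1, h2, h3⟩ := hs
    by_cases hc : Collinear ℝ ({p, q, r} : Set Pt)
    · have hqr : q ≠ r := h3.1
      have hq : q ∈ segment ℝ p r := by
        rcases hc.wbtw_or_wbtw_or_wbtw with hw | hw | hw
        · exact mem_segment_iff_wbtw.2 hw
        · exfalso
          have := mem_segment_iff_wbtw.2 hw
          rw [segment_symm] at this
          exact hqr (h2 r this (Or.inl (right_mem_segment ℝ _ _))).symm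
        · exfalso
          have := mem_segment_iff_wbtw.2 hw
          rw [segment_symm] at this
          exact h1 (h2 p (left_mem_segment ℝ _ _) (Or.inl this))
      have hseg := segment_split hq
      refine ⟨p :: r :: t, ⟨?_, ?_, h3.2.2⟩, ?_, by simp, by simp, by simp, ?_⟩
      · rintro rfl
        rw [segment_same] at hq
        exact h1 hq.symm
      · intro z hz hz'
        rw [hseg] at hz
        rcases hz with hz | hz
        · exfalso
          have := h2 z hz (Or.inr hz')
          subst this
          exact hqr (h3.2.1 z (left_mem_segment ℝ _ _) hz')
        · exact h3.2.1 z hz hz'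
      · exact (List.sublist_cons_self q (r :: t)).cons_cons p
      · simp only [rcs, hseg, Set.union_assoc]
    · have h' : ¬ RGB (q :: r :: t) := fun h' => h ⟨hc, h'⟩
      obtain ⟨l', a1, a2, a3, a4, a5, a6⟩ := remove_one (q :: r :: t) h3 h'
      rcases l' with _ | ⟨q', l'⟩
      · simp at a4
      · simp only [List.head?_cons, Option.some.injEq] at a4
        subst a4
        refine ⟨p :: q' :: l', ⟨h1, ?_, a1⟩, a2.cons_cons p, by simpa using a3, by simp, ?_, ?_⟩
        · rw [a6]; exact h2
        · simpa using a5
        · simp only [rcs] at a6 ⊢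
          rw [a6]

lemma clean_chain : ∀ (n : ℕ) (l : List Pt), l.length = n → RSC l → ∃ l', RSC l' ∧ RGB l' ∧
    l'.Sublist l ∧ l'.head? = l.head? ∧ l'.getLast? = l.getLast? ∧ rcs l' = rcs l := by
  intro n
  induction n using Nat.strong_induction_on with
  | _ n ih =>
    intro l hl hs
    by_cases hg : RGB l
    · exact ⟨l, hs, hg, List.Sublist.refl l, rfl, rfl, rfl⟩
    · obtain ⟨l', a1, a2, a3, a4, a5, a6⟩ := remove_one l hs hg
      obtain ⟨m, b1, b2, b3, b4, b5, b6⟩ := ih l'.length (hl ▸ a3) l' rfl a1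
      exact ⟨m, b1, b2, b3.trans a2, b4.trans a4, b5.trans a5, b6.trans a6⟩

/-! ### Lattice paths -/

def toPt (a : ℤ × ℤ) : Pt := ((a.1 : ℝ), (a.2 : ℝ))

lemma toPt_inj {a b : ℤ × ℤ} (h : toPt a = toPt b) : a = b := by
  simp only [toPt, Prod.mk.injEq, Int.cast_inj] at h
  exact Prod.ext h.1 h.2

lemma mem_seg {p q z : Pt} : z ∈ segment ℝ p q ↔
    ∃ t : ℝ, 0 ≤ t ∧ t ≤ 1 ∧ z.1 = p.1 + t * (q.1 - p.1) ∧ z.2 = p.2 + t * (q.2 - p.2) := by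
  rw [segment_eq_image']
  constructor
  · rintro ⟨t, ⟨h0, h1⟩, rfl⟩
    exact ⟨t, h0, h1, by simp, by simp⟩
  · rintro ⟨t, h0, h1, e1, e2⟩
    exact ⟨t, ⟨h0, h1⟩, by ext <;> simp [e1, e2]⟩

def HStep (a b : ℤ × ℤ) : Prop := a.2 = b.2 ∧ a.1 ≤ b.1 ∧ b.1 ≤ a.1 + 1
def VStep (a b : ℤ × ℤ) : Prop := a.1 = b.1 ∧ b.2 = a.2 + 1
def OStep (a b : ℤ × ℤ) : Prop := HStep a b ∨ VStep a b
def Nbr (a b : ℤ × ℤ) : Prop := OStep a b ∨ OStep b a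

lemma Nbr.refl (a : ℤ × ℤ) : Nbr a a := Or.inl (Or.inl ⟨rfl, le_rfl, by omega⟩)

/-- A row-preserving map of the lattice, weakly monotone in each row. -/
structure RowMono (f : ℤ × ℤ → ℤ × ℤ) : Prop where
  row : ∀ a, (f a).2 = a.2
  mono : ∀ a b, a.2 = b.2 → a.1 ≤ b.1 → (f a).1 ≤ (f b).1

def KeyC (f : ℤ × ℤ → ℤ × ℤ) (a b c d : ℤ × ℤ) (z : Pt) : Prop :=
  (∃ p q, (p = a ∨ p = b) ∧ (q = c ∨ q = d) ∧ z = toPt (f p) ∧ z = toPt (f q)) ∨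
    (f a = f c ∧ f b = f d) ∨ (f a = f d ∧ f b = f c)

lemma KeyC.swap1 {f a b c d z} (h : KeyC f a b c d z) : KeyC f b a c d z := by
  unfold KeyC at *
  rcases h with ⟨p, q, h1, h2, h3⟩ | h | h
  · exact Or.inl ⟨p, q, h1.symm, h2, h3⟩
  · exact Or.inr (Or.inr ⟨h.2, h.1⟩)
  · exact Or.inr (Or.inl ⟨h.2, h.1⟩)

lemma KeyC.swap2 {f a b c d z} (h : KeyC f a b c d z) : KeyC f a b d c z := by
  unfold KeyC at *
  rcases h with ⟨p, q, h1, h2, h3⟩ | h | h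
  · exact Or.inl ⟨p, q, h1, h2.symm, h3⟩
  · exact Or.inr (Or.inr h)
  · exact Or.inr (Or.inl h)

lemma KeyC.symm {f a b c d z} (h : KeyC f a b c d z) : KeyC f c d a b z := by
  unfold KeyC at *
  rcases h with ⟨p, q, h1, h2, h3⟩ | h | h
  · exact Or.inl ⟨q, p, h2, h1, h3.symm⟩
  · exact Or.inr (Or.inl ⟨h.1.symm, h.2.symm⟩)
  · exact Or.inr (Or.inr ⟨h.2.symm, h.1.symm⟩)

lemma seg_h {f} (hf : RowMono f) {a b : ℤ × ℤ} (h : HStep a b) {z : Pt}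
    (hz : z ∈ segment ℝ (toPt (f a)) (toPt (f b))) :
    z.2 = a.2 ∧ ((f a).1 : ℝ) ≤ z.1 ∧ z.1 ≤ (f b).1 := by
  obtain ⟨t, h0, h1, e1, e2⟩ := mem_seg.1 hz
  obtain ⟨g1, g2, g3⟩ := h
  have hm : ((f a).1 : ℝ) ≤ (f b).1 := by exact_mod_cast hf.mono a b g1 g2
  have r1 := hf.row a
  have r2 := hf.row b
  simp only [toPt, r1, r2, g1] at e1 e2
  refine ⟨by rw [e2, g1]; ring, ?_, ?_⟩ <;> rw [e1] <;> nlinarith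

lemma seg_v {f} (hf : RowMono f) {a b : ℤ × ℤ} (h : VStep a b) {z : Pt}
    (hz : z ∈ segment ℝ (toPt (f a)) (toPt (f b))) :
    ∃ t : ℝ, 0 ≤ t ∧ t ≤ 1 ∧ z.1 = (f a).1 + t * ((f b).1 - (f a).1) ∧ z.2 = a.2 + t := by
  obtain ⟨t, h0, h1, e1, e2⟩ := mem_seg.1 hz
  obtain ⟨g1, g2⟩ := h
  have r1 := hf.row a
  have r2 := hf.row b
  simp only [toPt, r1, r2, g2] at e1 e2
  refine ⟨t, h0, h1, e1, ?_⟩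
  rw [e2]; push_cast; ring

lemma key_HH {f} (hf : RowMono f) {a b c d : ℤ × ℤ} (h : HStep a b) (h' : HStep c d) {z : Pt}
    (hz : z ∈ segment ℝ (toPt (f a)) (toPt (f b)))
    (hz' : z ∈ segment ℝ (toPt (f c)) (toPt (f d))) : KeyC f a b c d z := by
  obtain ⟨e1, e2, e3⟩ := seg_h hf h hz
  obtain ⟨e1', e2', e3'⟩ := seg_h hf h' hz'
  have hrow : a.2 = c.2 := by
    have : (a.2 : ℝ) = c.2 := by rw [← e1, ← e1']
    exact_mod_cast this
  obtain ⟨g1, g2, g3⟩ := h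
  obtain ⟨g1', g2', g3'⟩ := h'
  have key : ∀ p q : ℤ × ℤ, p.2 = a.2 → q.2 = a.2 → p.1 ≤ q.1 → z.1 ≤ (f p).1 → (f q).1 ≤ z.1 →
      z = toPt (f p) ∧ z = toPt (f q) := by
    intro p q hp hq hpq h1 h2
    have hm : ((f p).1 : ℝ) ≤ (f q).1 := by exact_mod_cast hf.mono p q (by omega) hpq
    constructor
    · ext
      · simp only [toPt]; linarith
      · simp only [toPt, hf.row, hp, e1]
    · ext
      · simp only [toPt]; linarith
      · simp only [toPt, hf.row, hq, e1]
  by_cases c1 : b.1 ≤ c.1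
  · exact Or.inl ⟨b, c, Or.inr rfl, Or.inl rfl, key b c (by omega) (by omega) c1 e3 e2'⟩
  by_cases c2 : d.1 ≤ a.1
  · exact Or.inl ⟨a, d, Or.inl rfl, Or.inr rfl,
      (key d a (by omega) (by omega) c2 e3' e2).symm⟩
  have hac : a = c := Prod.ext (by omega) hrow
  have hbd : b = d := Prod.ext (by omega) (by omega)
  subst hac hbd
  exact Or.inr (Or.inl ⟨rfl, rfl⟩)

lemma key_HV {f} (hf : RowMono f) {a b c d : ℤ × ℤ} (h : HStep a b) (h' : VStep c d) {z : Pt}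
    (hz : z ∈ segment ℝ (toPt (f a)) (toPt (f b)))
    (hz' : z ∈ segment ℝ (toPt (f c)) (toPt (f d))) : KeyC f a b c d z := by
  obtain ⟨e1, e2, e3⟩ := seg_h hf h hz
  obtain ⟨t, t0, t1, e1', e2'⟩ := seg_v hf h' hz'
  obtain ⟨g1, g2, g3⟩ := h
  obtain ⟨g1', g2'⟩ := h'
  have key : ∀ q : ℤ × ℤ, (q = c ∨ q = d) → q.2 = a.2 → z.1 = (f q).1 → KeyC f a b c d z := by
    intro q hq hqa hzq
    have zq : z = toPt (f q) := by
      ext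
      · simpa only [toPt] using hzq
      · simp only [toPt, hf.row, hqa, e1]
    rcases (show q.1 ≤ a.1 ∨ b.1 ≤ q.1 by omega) with hc | hc
    · have hm : ((f q).1 : ℝ) ≤ (f a).1 := by exact_mod_cast hf.mono q a (by omega) hc
      refine Or.inl ⟨a, q, Or.inl rfl, hq, ?_, zq⟩
      ext
      · simp only [toPt]; linarith
      · simp only [toPt, hf.row, e1]
    · have hm : ((f b).1 : ℝ) ≤ (f q).1 := by exact_mod_cast hf.mono b q (by omega) hc
      refine Or.inl ⟨b, q, Or.inr rfl, hq, ?_, zq⟩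
      ext
      · simp only [toPt]; linarith
      · simp only [toPt, hf.row, e1, g1]
  have hlo : c.2 ≤ a.2 := by
    have : (c.2 : ℝ) ≤ a.2 := by linarith
    exact_mod_cast this
  have hhi : a.2 ≤ c.2 + 1 := by
    have : (a.2 : ℝ) ≤ c.2 + 1 := by linarith
    exact_mod_cast this
  rcases (show a.2 = c.2 ∨ a.2 = c.2 + 1 by omega) with hc | hc
  · refine key c (Or.inl rfl) hc.symm ?_
    have : t = 0 := by rw [hc] at e1; linarith
    rw [e1', this]; ring
  · refine key d (Or.inr rfl) (by omega) ?_
    have : t = 1 := by rw [hc] at e1; push_cast at e1; linarith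
    rw [e1', this]; ring

lemma key_VV_same {f} (hf : RowMono f) {a b c d : ℤ × ℤ} (h : VStep a b) (h' : VStep c d) {z : Pt}
    (hz : z ∈ segment ℝ (toPt (f a)) (toPt (f b)))
    (hz' : z ∈ segment ℝ (toPt (f c)) (toPt (f d))) (hrow : a.2 = c.2) (hle : a.1 ≤ c.1) :
    KeyC f a b c d z := by
  obtain ⟨t, t0, t1, e1, e2⟩ := seg_v hf h hz
  obtain ⟨s, s0, s1, e1', e2'⟩ := seg_v hf h' hz'
  obtain ⟨g1, g2⟩ := h
  obtain ⟨g1', g2'⟩ := h'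
  have hst : s = t := by rw [hrow] at e2; linarith
  subst hst
  have m1 : ((f a).1 : ℝ) ≤ (f c).1 := by exact_mod_cast hf.mono a c hrow hle
  have m2 : ((f b).1 : ℝ) ≤ (f d).1 := by
    exact_mod_cast hf.mono b d (by omega) (by omega)
  have hsum : (1 - s) * ((f c).1 - (f a).1) + s * ((f d).1 - (f b).1) = (0 : ℝ) := by
    rw [e1] at e1'; linarith
  have p1 : 0 ≤ (1 - s) * ((f c).1 - (f a).1 : ℝ) := mul_nonneg (by linarith) (by linarith)
  have p2 : 0 ≤ s * ((f d).1 - (f b).1 : ℝ) := mul_nonneg (by linarith) (by linarith)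
  have q1 : (1 - s) * ((f c).1 - (f a).1 : ℝ) = 0 := by linarith
  have q2 : s * ((f d).1 - (f b).1 : ℝ) = 0 := by linarith
  have rac : (f a).1 = (f c).1 → f a = f c := fun e => Prod.ext e (by rw [hf.row, hf.row, hrow])
  have rbd : (f b).1 = (f d).1 → f b = f d :=
    fun e => Prod.ext e (by rw [hf.row, hf.row]; omega)
  rcases mul_eq_zero.1 q1 with q1 | q1
  · rcases mul_eq_zero.1 q2 with q2 | q2
    · exfalso; linarith
    · have hb : f b = f d := rbd (by
        have : ((f b).1 : ℝ) = (f d).1 := by linarith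
        exact_mod_cast this)
      have zb : z = toPt (f b) := by
        have hs : s = 1 := by linarith
        ext
        · simp only [toPt, e1, hs]; ring
        · simp only [toPt, hf.row, e2, hs, g2]; push_cast; ring
      exact Or.inl ⟨b, d, Or.inr rfl, Or.inr rfl, zb, hb ▸ zb⟩
  · have ha : f a = f c := rac (by
      have : ((f a).1 : ℝ) = (f c).1 := by linarith
      exact_mod_cast this)
    rcases mul_eq_zero.1 q2 with q2 | q2
    · have za : z = toPt (f a) := by
        ext
        · simp only [toPt, e1, q2]; ring
        · simp only [toPt, hf.row, e2, q2]; ring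
      exact Or.inl ⟨a, c, Or.inl rfl, Or.inl rfl, za, ha ▸ za⟩
    · have hb : f b = f d := rbd (by
        have : ((f b).1 : ℝ) = (f d).1 := by linarith
        exact_mod_cast this)
      exact Or.inr (Or.inl ⟨ha, hb⟩)

lemma key_VV_next {f} (hf : RowMono f) {a b c d : ℤ × ℤ} (h : VStep a b) (h' : VStep c d) {z : Pt}
    (hz : z ∈ segment ℝ (toPt (f a)) (toPt (f b)))
    (hz' : z ∈ segment ℝ (toPt (f c)) (toPt (f d))) (hrow : a.2 < c.2) :
    KeyC f a b c d z := by
  obtain ⟨t, t0, t1, e1, e2⟩ := seg_v hf h hz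
  obtain ⟨s, s0, s1, e1', e2'⟩ := seg_v hf h' hz'
  obtain ⟨g1, g2⟩ := h
  have hr : (a.2 : ℝ) + 1 ≤ c.2 := by exact_mod_cast hrow
  have ht : t = 1 := by linarith
  have hs : s = 0 := by linarith
  refine Or.inl ⟨b, c, Or.inr rfl, Or.inl rfl, ?_, ?_⟩
  · ext
    · simp only [toPt, e1, ht]; ring
    · simp only [toPt, hf.row, e2, ht, g2]; push_cast; ring
  · ext
    · simp only [toPt, e1', hs]; ring
    · simp only [toPt, hf.row, e2', hs]; ring

lemma key_O {f} (hf : RowMono f) {a b c d : ℤ × ℤ} (h : OStep a b) (h' : OStep c d) {z : Pt}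
    (hz : z ∈ segment ℝ (toPt (f a)) (toPt (f b)))
    (hz' : z ∈ segment ℝ (toPt (f c)) (toPt (f d))) : KeyC f a b c d z := by
  rcases h with h | h <;> rcases h' with h' | h'
  · exact key_HH hf h h' hz hz'
  · exact key_HV hf h h' hz hz'
  · exact (key_HV hf h' h hz' hz).symm
  · rcases lt_trichotomy a.2 c.2 with hr | hr | hr
    · exact key_VV_next hf h h' hz hz' hr
    · rcases le_total a.1 c.1 with hle | hle
      · exact key_VV_same hf h h' hz hz' hr hle
      · exact (key_VV_same hf h' h hz' hz hr.symm hle).symm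
    · exact (key_VV_next hf h' h hz' hz hr).symm

lemma key {f} (hf : RowMono f) {a b c d : ℤ × ℤ} (h : Nbr a b) (h' : Nbr c d) {z : Pt}
    (hz : z ∈ segment ℝ (toPt (f a)) (toPt (f b)))
    (hz' : z ∈ segment ℝ (toPt (f c)) (toPt (f d))) : KeyC f a b c d z := by
  rcases h with h | h <;> rcases h' with h' | h'
  · exact key_O hf h h' hz hz'
  · rw [segment_symm] at hz'
    exact (key_O hf h h' hz hz').swap2
  · rw [segment_symm] at hz
    exact (key_O hf h h' hz hz').swap1
  · rw [segment_symm] at hz hz'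
    exact (key_O hf h h' hz hz').swap1.swap2

lemma rcs_step (g : ℤ × ℤ → Pt) : ∀ (P : List (ℤ × ℤ)) (z : Pt), P.IsChain Nbr →
    z ∈ rcs (P.map g) → ∃ c d, c ∈ P ∧ d ∈ P ∧ Nbr c d ∧ z ∈ segment ℝ (g c) (g d)
  | [], z, _, hz => by simp [rcs] at hz
  | [a], z, _, hz => by
    refine ⟨a, a, by simp, by simp, Nbr.refl a, ?_⟩
    simpa [rcs] using hz
  | a :: b :: t, z, hP, hz => by
    rw [List.isChain_cons_cons] at hP
    rcases hz with hz | hz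
    · exact ⟨a, b, by simp, by simp, hP.1, hz⟩
    · obtain ⟨c, d, hc, hd, h1, h2⟩ := rcs_step g (b :: t) z hP.2 hz
      exact ⟨c, d, List.mem_cons_of_mem _ hc, List.mem_cons_of_mem _ hd, h1, h2⟩

lemma RSC_image {f} (hf : RowMono f) : ∀ (P : List (ℤ × ℤ)), P.IsChain Nbr →
    (P.map f).Nodup → RSC (P.map (fun a => toPt (f a)))
  | [], _, _ => trivial
  | [a], _, _ => trivial
  | a :: b :: t, hP, hn => by
    rw [List.isChain_cons_cons] at hP
    rw [List.map_cons, List.nodup_cons] at hn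
    have hne : ∀ c ∈ b :: t, f a ≠ f c := fun c hc e => hn.1 (e ▸ List.mem_map_of_mem hc)
    refine ⟨fun e => hne b (by simp) (toPt_inj e), ?_, RSC_image hf (b :: t) hP.2 hn.2⟩
    intro z hz hz'
    obtain ⟨c, d, hc, hd, h1, h2⟩ := rcs_step (fun a => toPt (f a)) (b :: t) z hP.2 hz'
    rcases key hf hP.1 h1 hz h2 with ⟨p, q, hp, hq, e1, e2⟩ | h | h
    · rcases hp with rfl | rfl
      · exfalso
        have : f p = f q := toPt_inj (e1 ▸ e2)
        rcases hq with rfl | rfl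
        · exact hne _ hc this
        · exact hne _ hd this
      · exact e1
    · exact absurd h.1 (hne c hc)
    · exact absurd h.1 (hne d hd)

/-! ### Lattice paths of orthogonal chains -/

structure GP (l : List Pt) (P : List (ℤ × ℤ)) : Prop where
  head : P.head?.map toPt = l.head?
  last : P.getLast?.map toPt = l.getLast?
  chain : P.IsChain Nbr
  nodup : P.Nodup
  sub : ∀ a ∈ P, toPt a ∈ rcs l
  sup : ∀ p ∈ l, p ∈ P.map toPt
  up : (l.map Prod.snd).IsChain (· ≤ ·) → (P.map Prod.snd).IsChain (· ≤ ·)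
  dn : (l.map Prod.snd).IsChain (fun a b => b ≤ a) → (P.map Prod.snd).IsChain (fun a b => b ≤ a)

lemma GP_cons {p p' : ℤ × ℤ} {t m : List Pt} {P : List (ℤ × ℤ)} (h : GP (toPt p' :: m) P)
    (hN : Nbr p p') (h1 : toPt p ∉ rcs (toPt p' :: m))
    (h2 : rcs (toPt p' :: m) ⊆ rcs (toPt p :: t))
    (h3 : ∀ x ∈ t, x ∈ toPt p' :: m) (h4 : (toPt p :: t).getLast? = (toPt p' :: m).getLast?)
    (h5 : ((toPt p :: t).map Prod.snd).IsChain (· ≤ ·) →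
      p.2 ≤ p'.2 ∧ ((toPt p' :: m).map Prod.snd).IsChain (· ≤ ·))
    (h6 : ((toPt p :: t).map Prod.snd).IsChain (fun a b => b ≤ a) →
      p'.2 ≤ p.2 ∧ ((toPt p' :: m).map Prod.snd).IsChain (fun a b => b ≤ a)) :
    GP (toPt p :: t) (p :: P) := by
  obtain ⟨q, P', rfl⟩ : ∃ q P', P = q :: P' := by
    rcases P with _ | ⟨q, P'⟩
    · have := h.head; simp at this
    · exact ⟨q, P', rfl⟩
  obtain rfl : q = p' := by
    have := h.head
    simp only [List.head?_cons, Option.map_some, Option.some.injEq] at this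
    exact toPt_inj this
  refine ⟨by simp, ?_, ?_, ?_, ?_, ?_, ?_, ?_⟩
  · rw [h4, ← h.last, List.getLast?_cons_cons]
  · rw [List.isChain_cons_cons]; exact ⟨hN, h.chain⟩
  · rw [List.nodup_cons]; exact ⟨fun hp => h1 (h.sub p hp), h.nodup⟩
  · intro a ha
    rw [List.mem_cons] at ha
    rcases ha with rfl | ha
    · exact mem_rcs _ _ (by simp)
    · exact h2 (h.sub a ha)
  · intro x hx
    rw [List.mem_cons] at hx
    rw [List.map_cons]
    rcases hx with rfl | hx
    · simp
    · exact List.mem_cons_of_mem _ (h.sup x (h3 x hx))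
  · intro hc
    obtain ⟨a1, a2⟩ := h5 hc
    have := h.up a2
    simp only [List.map_cons, List.isChain_cons_cons] at this ⊢
    exact ⟨a1, this⟩
  · intro hc
    obtain ⟨a1, a2⟩ := h6 hc
    have := h.dn a2
    simp only [List.map_cons, List.isChain_cons_cons] at this ⊢
    exact ⟨a1, this⟩

lemma GP_extend {δ : ℤ × ℤ} (hδ0 : δ ≠ 0) (hδ : ∀ p : ℤ × ℤ, Nbr p (p + δ)) {q : ℤ × ℤ}
    {t : List Pt} {P : List (ℤ × ℤ)} (h : GP (toPt q :: t) P) :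
    ∀ (n : ℕ) (p : ℤ × ℤ), q = p + ((n : ℤ) + 1) • δ → RSC (toPt p :: toPt q :: t) →
      ∃ P', GP (toPt p :: toPt q :: t) P' := by
  intro n
  induction n with
  | zero =>
    intro p hq hs
    obtain ⟨s1, s2, s3⟩ := hs
    have hq' : q = p + δ := by simpa using hq
    refine ⟨p :: P, GP_cons h (hq' ▸ hδ p) ?_ ?_ ?_ ?_ ?_ ?_⟩
    · intro hp; exact s1 (s2 _ (left_mem_segment ℝ _ _) hp)
    · exact Set.subset_union_right
    · intro x hx; exact hx
    · rw [List.getLast?_cons_cons]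
    · intro hc
      simp only [List.map_cons, List.isChain_cons_cons] at hc ⊢
      exact ⟨by have := hc.1; simp only [toPt] at this; exact_mod_cast this, hc.2⟩
    · intro hc
      simp only [List.map_cons, List.isChain_cons_cons] at hc ⊢
      exact ⟨by have := hc.1; simp only [toPt] at this; exact_mod_cast this, hc.2⟩
  | succ n ih =>
    intro p hq hs
    obtain ⟨s1, s2, s3⟩ := hs
    have q1 : q.1 = p.1 + ((n : ℤ) + 1 + 1) * δ.1 := by rw [hq]; simp
    have q2 : q.2 = p.2 + ((n : ℤ) + 1 + 1) * δ.2 := by rw [hq]; simp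
    have q1' : (q.1 : ℝ) = p.1 + ((n : ℝ) + 1 + 1) * δ.1 := by rw [q1]; push_cast; ring
    have q2' : (q.2 : ℝ) = p.2 + ((n : ℝ) + 1 + 1) * δ.2 := by rw [q2]; push_cast; ring
    have hn : (0 : ℝ) < (n : ℝ) + 1 + 1 := by positivity
    have hn0 : (0 : ℝ) ≤ n := by positivity
    have hmem : toPt (p + δ) ∈ segment ℝ (toPt p) (toPt q) := by
      rw [mem_seg]
      refine ⟨1 / ((n : ℝ) + 1 + 1), by positivity, ?_, ?_, ?_⟩
      · rw [div_le_one hn]; linarith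
      · simp only [toPt, q1']; push_cast [Prod.fst_add]; field_simp; ring
      · simp only [toPt, q2']; push_cast [Prod.snd_add]; field_simp; ring
    have hsub : segment ℝ (toPt (p + δ)) (toPt q) ⊆ segment ℝ (toPt p) (toPt q) :=
      (convex_segment _ _).segment_subset hmem (right_mem_segment ℝ _ _)
    have hpn : toPt p ∉ segment ℝ (toPt (p + δ)) (toPt q) := by
      intro hp
      obtain ⟨u, u0, u1, e1, e2⟩ := mem_seg.1 hp
      simp only [toPt, q1', q2', Prod.fst_add, Prod.snd_add, Int.cast_add] at e1 e2
      have hu : (1 + u * ((n : ℝ) + 1)) ≠ 0 := by positivity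
      have f1 : (1 + u * ((n : ℝ) + 1)) * δ.1 = 0 := by linarith
      have f2 : (1 + u * ((n : ℝ) + 1)) * δ.2 = 0 := by linarith
      apply hδ0
      ext
      · exact_mod_cast (mul_eq_zero.1 f1).resolve_left hu
      · exact_mod_cast (mul_eq_zero.1 f2).resolve_left hu
    have hne : toPt (p + δ) ≠ toPt q := by
      intro e
      have e' := toPt_inj e
      have g1 := congrArg Prod.fst e'
      have g2 := congrArg Prod.snd e'
      rw [q1, Prod.fst_add] at g1
      rw [q2, Prod.snd_add] at g2
      have hn1 : ((n : ℤ) + 1) ≠ 0 := by positivity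
      have f1 : ((n : ℤ) + 1) * δ.1 = 0 := by linarith
      have f2 : ((n : ℤ) + 1) * δ.2 = 0 := by linarith
      apply hδ0
      ext
      · exact (mul_eq_zero.1 f1).resolve_left hn1
      · exact (mul_eq_zero.1 f2).resolve_left hn1
    obtain ⟨P', hP'⟩ := ih (p + δ) (by rw [hq]; push_cast; module)
      ⟨hne, fun z hz hz' => s2 z (hsub hz) hz', s3⟩
    refine ⟨p :: P', GP_cons hP' (hδ p) ?_ ?_ ?_ ?_ ?_ ?_⟩
    · rintro (hp | hp)
      · exact hpn hp
      · exact s1 (s2 _ (left_mem_segment ℝ _ _) hp)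
    · exact Set.union_subset_union_left _ hsub
    · intro x hx; exact List.mem_cons_of_mem _ hx
    · rw [List.getLast?_cons_cons, List.getLast?_cons_cons]
    · intro hc
      simp only [List.map_cons, List.isChain_cons_cons] at hc ⊢
      have h1 : p.2 ≤ q.2 := by have := hc.1; simp only [toPt] at this; exact_mod_cast this
      have hd : 0 ≤ δ.2 := by
        by_contra hd
        have : ((n : ℤ) + 1 + 1) * δ.2 < 0 := mul_neg_of_pos_of_neg (by positivity) (by omega)
        omega
      have h2 : (p + δ).2 ≤ q.2 := by
        rw [q2, Prod.snd_add]
        have : 0 ≤ ((n : ℤ) + 1) * δ.2 := by positivity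
        linarith
      refine ⟨by rw [Prod.snd_add]; omega, ?_, hc.2⟩
      simp only [toPt]; exact_mod_cast h2
    · intro hc
      simp only [List.map_cons, List.isChain_cons_cons] at hc ⊢
      have h1 : q.2 ≤ p.2 := by have := hc.1; simp only [toPt] at this; exact_mod_cast this
      have hd : δ.2 ≤ 0 := by
        by_contra hd
        have : 0 < ((n : ℤ) + 1 + 1) * δ.2 := mul_pos (by positivity) (by omega)
        omega
      have h2 : q.2 ≤ (p + δ).2 := by
        rw [q2, Prod.snd_add]
        have : 0 ≤ ((n : ℤ) + 1) * (-δ.2) := mul_nonneg (by positivity) (by omega)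
        linarith
      refine ⟨by rw [Prod.snd_add]; omega, ?_, hc.2⟩
      simp only [toPt]; exact_mod_cast h2

lemma Nbr_add (p δ : ℤ × ℤ) (h : δ = (1, 0) ∨ δ = (-1, 0) ∨ δ = (0, 1) ∨ δ = (0, -1)) :
    Nbr p (p + δ) := by
  rcases h with rfl | rfl | rfl | rfl <;>
    simp [Nbr, OStep, HStep, VStep]

lemma exists_dir (p q : ℤ × ℤ) (hne : p ≠ q) (h : p.1 = q.1 ∨ p.2 = q.2) :
    ∃ (δ : ℤ × ℤ) (n : ℕ), (δ = (1, 0) ∨ δ = (-1, 0) ∨ δ = (0, 1) ∨ δ = (0, -1)) ∧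
      q = p + ((n : ℤ) + 1) • δ := by
  rcases h with h | h
  · have : p.2 ≠ q.2 := fun e => hne (Prod.ext h e)
    rcases lt_or_gt_of_ne this with hl | hl
    · refine ⟨(0, 1), (q.2 - p.2 - 1).toNat, by simp, ?_⟩
      ext <;> simp <;> omega
    · refine ⟨(0, -1), (p.2 - q.2 - 1).toNat, by simp, ?_⟩
      ext <;> simp <;> omega
  · have : p.1 ≠ q.1 := fun e => hne (Prod.ext e h)
    rcases lt_or_gt_of_ne this with hl | hl
    · refine ⟨(1, 0), (q.1 - p.1 - 1).toNat, by simp, ?_⟩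
      ext <;> simp <;> omega
    · refine ⟨(-1, 0), (p.1 - q.1 - 1).toNat, by simp, ?_⟩
      ext <;> simp <;> omega

lemma IsIntPt.exists_toPt {p : Pt} (h : IsIntPt p) : ∃ a, p = toPt a := by
  obtain ⟨⟨a, ha⟩, ⟨b, hb⟩⟩ := h
  exact ⟨(a, b), Prod.ext ha hb⟩

lemma exists_GP : ∀ l : List Pt, l ≠ [] → RSC l → IsOrthoChain l → (∀ p ∈ l, IsIntPt p) →
    ∃ P, GP l P
  | [], h, _, _, _ => absurd rfl h
  | [p], _, _, _, hi => by
    obtain ⟨a, rfl⟩ := (hi p (by simp)).exists_toPt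
    refine ⟨[a], ?_⟩
    constructor <;> simp [rcs]
  | p :: q :: t, _, hs, ho, hi => by
    obtain ⟨a, rfl⟩ := (hi p (by simp)).exists_toPt
    obtain ⟨b, rfl⟩ := (hi q (by simp)).exists_toPt
    have hsegs : chainSegs (toPt a :: toPt b :: t) = (toPt a, toPt b) :: chainSegs (toPt b :: t) :=
      rfl
    obtain ⟨P, hP⟩ := exists_GP (toPt b :: t) (by simp) hs.2.2
      (fun s hs => ho s (by rw [hsegs]; exact List.mem_cons_of_mem _ hs))
      (fun p hp => hi p (List.mem_cons_of_mem _ hp))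
    have hne : a ≠ b := fun e => hs.1 (by rw [e])
    have hal : a.1 = b.1 ∨ a.2 = b.2 := by
      have := ho (toPt a, toPt b) (by rw [hsegs]; simp)
      simpa [toPt] using this
    obtain ⟨δ, n, hδ, hq⟩ := exists_dir a b hne hal
    refine GP_extend ?_ (fun p => Nbr_add p δ hδ) hP n a hq hs
    rcases hδ with rfl | rfl | rfl | rfl <;> simp

/-! ### Collapsing the vertex segments -/

section Collapse

variable {V : Type} (X1 X2 Y : V → ℤ)

def InB (v : V) (a : ℤ × ℤ) : Prop := a.2 = Y v ∧ X1 v ≤ a.1 ∧ a.1 ≤ X2 v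

open Classical in
noncomputable def collapse (a : ℤ × ℤ) : ℤ × ℤ :=
  if h : ∃ v, InB X1 X2 Y v a then (X1 h.choose, a.2) else a

lemma collapse_in {X1 X2 Y : V → ℤ}
    (hd : ∀ v w a, InB X1 X2 Y v a → InB X1 X2 Y w a → v = w) {v : V} {a : ℤ × ℤ}
    (h : InB X1 X2 Y v a) : collapse X1 X2 Y a = (X1 v, Y v) := by
  have h' : ∃ v, InB X1 X2 Y v a := ⟨v, h⟩
  unfold collapse
  rw [dif_pos h', hd _ _ _ h'.choose_spec h, h.1]

lemma collapse_out {X1 X2 Y : V → ℤ} {a : ℤ × ℤ} (h : ¬ ∃ v, InB X1 X2 Y v a) :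
    collapse X1 X2 Y a = a := by
  unfold collapse
  rw [dif_neg h]

lemma collapse_cases {X1 X2 Y : V → ℤ} (hX : ∀ v, X1 v ≤ X2 v)
    (hd : ∀ v w a, InB X1 X2 Y v a → InB X1 X2 Y w a → v = w) {a b : ℤ × ℤ}
    (h : collapse X1 X2 Y a = collapse X1 X2 Y b) :
    a = b ∨ ∃ v, InB X1 X2 Y v a ∧ InB X1 X2 Y v b := by
  have hself : ∀ v, InB X1 X2 Y v (X1 v, Y v) := fun v => ⟨rfl, le_rfl, hX v⟩
  by_cases ha : ∃ v, InB X1 X2 Y v a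
  · obtain ⟨v, hv⟩ := ha
    rw [collapse_in hd hv] at h
    right
    by_cases hb : ∃ v, InB X1 X2 Y v b
    · obtain ⟨w, hw⟩ := hb
      rw [collapse_in hd hw] at h
      have : v = w := hd v w (X1 v, Y v) (hself v) (h ▸ hself w)
      exact ⟨v, hv, this ▸ hw⟩
    · rw [collapse_out hb] at h
      exact absurd ⟨v, h ▸ hself v⟩ hb
  · rw [collapse_out ha] at h
    by_cases hb : ∃ v, InB X1 X2 Y v b
    · obtain ⟨w, hw⟩ := hb
      rw [collapse_in hd hw] at h
      exact absurd ⟨w, h ▸ hself w⟩ ha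
    · rw [collapse_out hb] at h
      exact Or.inl h

lemma collapse_rowMono {X1 X2 Y : V → ℤ}
    (hd : ∀ v w a, InB X1 X2 Y v a → InB X1 X2 Y w a → v = w) :
    RowMono (collapse X1 X2 Y) := by
  constructor
  · intro a
    by_cases ha : ∃ v, InB X1 X2 Y v a
    · obtain ⟨v, hv⟩ := ha
      rw [collapse_in hd hv]; exact hv.1.symm
    · rw [collapse_out ha]
  · intro a b hrow hle
    by_cases ha : ∃ v, InB X1 X2 Y v a
    · obtain ⟨v, hv⟩ := ha
      rw [collapse_in hd hv]
      by_cases hb : ∃ v, InB X1 X2 Y v b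
      · obtain ⟨w, hw⟩ := hb
        rw [collapse_in hd hw]
        show X1 v ≤ X1 w
        by_contra hlt
        have : v = w := hd v w a hv ⟨hrow.trans hw.1, by have := hv.2.1; omega, by
          have := hw.2.2; omega⟩
        subst this; omega
      · rw [collapse_out hb]; exact hv.2.1.trans hle
    · rw [collapse_out ha]
      by_cases hb : ∃ v, InB X1 X2 Y v b
      · obtain ⟨w, hw⟩ := hb
        rw [collapse_in hd hw]
        show a.1 ≤ X1 w
        by_contra hlt
        exact ha ⟨w, hrow.trans hw.1, by omega, hle.trans hw.2.2⟩
      · rw [collapse_out hb]; exact hle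

end Collapse

lemma rcs_subset_convex {S : Set Pt} (hS : Convex ℝ S) : ∀ l : List Pt, (∀ p ∈ l, p ∈ S) →
    rcs l ⊆ S
  | [], _ => by simp [rcs]
  | [p], h => by simpa [rcs] using h
  | p :: q :: l, h => by
    refine Set.union_subset ?_ (rcs_subset_convex hS (q :: l)
      (fun x hx => h x (List.mem_cons_of_mem _ hx)))
    exact hS.segment_subset (h p (by simp)) (h q (by simp))

lemma convex_xstrip (lo hi : ℝ) : Convex ℝ {p : Pt | lo ≤ p.1 ∧ p.1 ≤ hi} :=
  (convex_Icc lo hi).linear_preimage (LinearMap.fst ℝ ℝ ℝ)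

lemma convex_ystrip (lo hi : ℝ) : Convex ℝ {p : Pt | lo ≤ p.2 ∧ p.2 ≤ hi} :=
  (convex_Icc lo hi).linear_preimage (LinearMap.snd ℝ ℝ ℝ)

/-- The properties of the new chain of an edge, in a form symmetric under reversal. -/
structure EP (f : ℤ × ℤ → ℤ × ℤ) (l L : List Pt) : Prop where
  simple : IsSimpleChain L
  genuine : GenuineBends L
  steps : ∀ z ∈ chainSet L, ∃ c d, Nbr c d ∧ z ∈ segment ℝ (toPt (f c)) (toPt (f d)) ∧
    toPt c ∈ chainSet l ∧ toPt d ∈ chainSet l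
  back : ∀ p ∈ l, ∃ z ∈ chainSet L, z.2 = p.2
  corners : ∀ p ∈ L, ∃ a, p = toPt (f a) ∧ toPt a ∈ chainSet l
  mono : IsMonoChain l → IsMonoChain L

lemma chainSet_reverse (l : List Pt) (hl : 2 ≤ l.length) : chainSet l.reverse = chainSet l := by
  apply Set.Subset.antisymm (chainSet_reverse_sub l hl)
  have := chainSet_reverse_sub l.reverse (by simpa using hl)
  rwa [List.reverse_reverse] at this

lemma EP.reverse {f l L} (h : EP f l L) (hl : 2 ≤ l.length) : EP f l.reverse L.reverse := by
  have e1 := chainSet_reverse l hl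
  have e2 := chainSet_reverse L h.simple.1
  refine ⟨isSimple_reverse _ h.simple, genuine_reverse _ h.genuine, ?_, ?_, ?_, ?_⟩
  · rw [e1, e2]; exact h.steps
  · rw [e2]; intro p hp; exact h.back p (by simpa using hp)
  · rw [e1]; intro p hp; exact h.corners p (by simpa using hp)
  · intro hm
    apply mono_reverse
    apply h.mono
    have := mono_reverse _ hm
    rwa [List.reverse_reverse] at this

lemma exists_EP {f} (hf : RowMono f) {l : List Pt} (hs : IsSimpleChain l) (ho : IsOrthoChain l)
    (hi : ∀ p ∈ l, IsIntPt p)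
    (hinj : ∀ a b, toPt a ∈ chainSet l → toPt b ∈ chainSet l → f a = f b → a = b)
    {a b : ℤ × ℤ} (ha : l.head? = some (toPt a)) (hb : l.getLast? = some (toPt b)) :
    ∃ m : List Pt, EP f l (toPt (f a) :: (m ++ [toPt (f b)])) := by
  obtain ⟨h2, hR⟩ := (isSimple_RSC l).1 hs
  have hcs := chainSet_eq_rcs l h2
  obtain ⟨P, hP⟩ := exists_GP l (by rintro rfl; simp at h2) hR ho hi
  have hsub : ∀ c ∈ P, toPt c ∈ chainSet l := fun c hc => hcs ▸ hP.sub c hc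
  have hnd : (P.map f).Nodup :=
    List.Nodup.map_on (fun x hx y hy e => hinj x y (hsub x hx) (hsub y hy) e) hP.nodup
  have hRim := RSC_image hf P hP.chain hnd
  obtain ⟨L, b1, b2, b3, b4, b5, b6⟩ := clean_chain _ _ rfl hRim
  have hPh : P.head? = some a := by
    have := hP.head
    rw [ha] at this
    rcases hh : P.head? with _ | c
    · rw [hh] at this; simp at this
    · rw [hh] at this
      simp only [Option.map_some, Option.some.injEq] at this
      rw [toPt_inj this]
  have hPl : P.getLast? = some b := by
    have := hP.last
    rw [hb] at this
    rcases hh : P.getLast? with _ | c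
    · rw [hh] at this; simp at this
    · rw [hh] at this
      simp only [Option.map_some, Option.some.injEq] at this
      rw [toPt_inj this]
  have hab : toPt a ≠ toPt b := by
    intro e
    rcases l with _ | ⟨x, _ | ⟨y, t⟩⟩
    · simp at h2
    · simp at h2
    · have hnd := hs.2.1
      rw [List.nodup_cons] at hnd
      apply hnd.1
      rw [List.getLast?_cons_cons] at hb
      simp only [List.head?_cons, Option.some.injEq] at ha
      rw [ha, e]
      exact List.mem_of_getLast? hb
  have hma : toPt a ∈ chainSet l := hcs ▸ mem_rcs l _ (List.mem_of_head? ha)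
  have hmb : toPt b ∈ chainSet l := hcs ▸ mem_rcs l _ (List.mem_of_getLast? hb)
  have hfab : toPt (f a) ≠ toPt (f b) := by
    intro e
    exact hab (congrArg toPt (hinj a b hma hmb (toPt_inj e)))
  rw [List.head?_map, hPh] at b4
  rw [List.getLast?_map, hPl] at b5
  simp only [Option.map_some] at b4 b5
  obtain ⟨m, rfl⟩ : ∃ m, L = toPt (f a) :: (m ++ [toPt (f b)]) := by
    rcases L with _ | ⟨x, t⟩
    · simp at b4
    · simp only [List.head?_cons, Option.some.injEq] at b4
      subst b4
      rcases List.eq_nil_or_concat t with rfl | ⟨m, y, rfl⟩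
      · simp at b5; exact absurd b5 hfab
      · refine ⟨m, ?_⟩
        have : y = toPt (f b) := by
          rw [List.concat_eq_append, ← List.cons_append, List.getLast?_concat] at b5
          simpa using b5
        rw [this, List.concat_eq_append]
  refine ⟨m, ?_⟩
  set L := toPt (f a) :: (m ++ [toPt (f b)]) with hL
  have hL2 : 2 ≤ L.length := by simp [hL]
  have hcL : chainSet L = rcs (P.map (fun a => toPt (f a))) := by
    rw [chainSet_eq_rcs L hL2, b6]
  refine ⟨(isSimple_RSC L).2 ⟨hL2, b1⟩, (genuine_iff L).2 b2, ?_, ?_, ?_, ?_⟩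
  · intro z hz
    rw [hcL] at hz
    obtain ⟨c, d, hc, hd, h1, h2⟩ := rcs_step _ P z hP.chain hz
    exact ⟨c, d, h1, h2, hsub c hc, hsub d hd⟩
  · intro p hp
    obtain ⟨c, hc, rfl⟩ := List.mem_map.1 (hP.sup p hp)
    refine ⟨toPt (f c), ?_, by simp only [toPt, hf.row]⟩
    rw [hcL]
    exact mem_rcs _ _ (List.mem_map.2 ⟨c, hc, rfl⟩)
  · intro p hp
    obtain ⟨c, hc, rfl⟩ := List.mem_map.1 (b3.subset hp)
    exact ⟨c, rfl, hsub c hc⟩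
  · have aux : ∀ (R : ℝ → ℝ → Prop) (S : ℤ → ℤ → Prop) [IsTrans ℝ R],
        (∀ x y : ℤ, S x y → R x y) → (P.map Prod.snd).IsChain S →
        (L.map Prod.snd).IsChain R := by
      intro R S _ hRS h
      have h1 : ((P.map (fun a => toPt (f a))).map Prod.snd).IsChain R := by
        have e : (P.map (fun a => toPt (f a))).map Prod.snd
            = (P.map Prod.snd).map (fun n : ℤ => (n : ℝ)) := by
          simp only [List.map_map]
          apply List.map_congr_left
          intro c _
          simp [toPt, hf.row]
        rw [e, List.isChain_map]
        exact h.imp hRS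
      exact h1.sublist (b3.map _)
    rintro (h | h)
    · left
      exact aux (· ≤ ·) (· ≤ ·) (fun x y h => by exact_mod_cast h) (hP.up h)
    · right
      have : IsTrans ℝ (fun a b : ℝ => b ≤ a) := ⟨fun a b c h1 h2 => le_trans h2 h1⟩
      exact aux (fun a b => b ≤ a) (fun a b => b ≤ a) (fun x y h => by exact_mod_cast h) (hP.dn h)

/-- Any planar flat orthogonal drawing `D` of a finite simple graph
`G` can be transformed into a planar poly-line drawing `D'` of `G` with the same
y-coordinates, the same left-to-right order in each row, and width no larger than the
width of `D`; moreover `D'` is y-monotone if `D` was, and `D'` has the same height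
as `D`. -/
theorem flatOrth_to_polyline {V : Type} [Fintype V] (G : SimpleGraph V)
    (D : OrthDrawing G) (hpl : D.IsPlanar) (hflat : D.IsFlat) (hint : D.IntCoords) :
    ∃ D' : PolylineDrawing G, D'.IsPlanar ∧ D'.IntCoords ∧
      (∀ v, (D'.pos v).2 = (D.box v).y1) ∧
      (∀ v w : V, (D.box v).y1 = (D.box w).y1 → (D.box v).x2 < (D.box w).x1 →
        (D'.pos v).1 < (D'.pos w).1) ∧
      (∀ w : ℕ, D.InWidth w → D'.InWidth w) ∧
      (D.IsYMonotone → D'.IsYMonotone) ∧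
      (∀ h : ℕ, D.InHeight h ↔ D'.InHeight h) := by
  obtain ⟨hdis, hch, hends, hbox, hcross⟩ := hpl
  -- integer coordinates of the vertex segments
  have hbi : ∀ v, ∃ x1 x2 y : ℤ, (D.box v).x1 = x1 ∧ (D.box v).x2 = x2 ∧ (D.box v).y1 = y := by
    intro v
    have h1 := hint ((D.box v).x1, (D.box v).y1) (Or.inl (Set.mem_iUnion.2 ⟨v, by simp⟩))
    have h2 := hint ((D.box v).x2, (D.box v).y1) (Or.inl (Set.mem_iUnion.2 ⟨v, by simp⟩))
    obtain ⟨⟨a, ha⟩, ⟨b, hb⟩⟩ := h1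
    obtain ⟨⟨c, hc⟩, -⟩ := h2
    exact ⟨a, c, b, ha, hc, hb⟩
  choose X1 X2 Y hX1 hX2 hY using hbi
  have hY2 : ∀ v, (D.box v).y2 = Y v := fun v => by rw [← hflat v, hY]
  have hX : ∀ v, X1 v ≤ X2 v := fun v => by
    have := (D.box v).hx
    rw [hX1, hX2] at this
    exact_mod_cast this
  have hin : ∀ v a, toPt a ∈ (D.box v).pts ↔ InB X1 X2 Y v a := by
    intro v a
    simp only [Box.pts, Set.mem_prod, Set.mem_Icc, hX1, hX2, hY, hY2, toPt, InB, Int.cast_le]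
    constructor
    · rintro ⟨⟨h1, h2⟩, h3, h4⟩
      exact ⟨le_antisymm h4 h3, h1, h2⟩
    · rintro ⟨h1, h2, h3⟩
      exact ⟨⟨h2, h3⟩, h1.ge, h1.le⟩
  have hd : ∀ v w a, InB X1 X2 Y v a → InB X1 X2 Y w a → v = w := by
    intro v w a hv hw
    by_contra hne
    exact Set.disjoint_left.1 (hdis v w hne) ((hin v a).2 hv) ((hin w a).2 hw)
  set f := collapse X1 X2 Y with hfdef
  have hf : RowMono f := collapse_rowMono hd
  let pos : V → Pt := fun v => toPt (X1 v, Y v)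
  have hself : ∀ v, InB X1 X2 Y v (X1 v, Y v) := fun v => ⟨rfl, le_rfl, hX v⟩
  have hpos : ∀ v a, InB X1 X2 Y v a → toPt (f a) = pos v := fun v a h => by
    rw [hfdef, collapse_in hd h]
  have hposinj : Function.Injective pos := by
    intro v w h
    have e := toPt_inj h
    exact hd v w (X1 v, Y v) (hself v) (e ▸ hself w)
  have hlen : ∀ u v, G.Adj u v → 2 ≤ (D.chain u v).length := fun u v h => (hch u v h).1.1
  have hcorner : ∀ u v, G.Adj u v → ∀ p ∈ D.chain u v, p ∈ D.points := by
    intro u v h p hp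
    refine Or.inr ?_
    simp only [Set.mem_iUnion]
    exact ⟨u, v, h, hp⟩
  -- a lattice point of a curve in a box belongs to an end vertex
  have hcb : ∀ u v w a, G.Adj u v → toPt a ∈ D.curve u v → InB X1 X2 Y w a → w = u ∨ w = v := by
    intro u v w a h ha hw
    rcases hbox u v w h ⟨ha, (hin w a).2 hw⟩ with h | h
    · exact Or.inl h.1
    · exact Or.inr h.1
  -- end points of chains
  have hendbox : ∀ u v a, G.Adj u v →
      ((D.chain u v).head? = some (toPt a) ∨ (D.chain u v).getLast? = some (toPt a)) →
      ∃ w, (w = u ∨ w = v) ∧ InB X1 X2 Y w a := by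
    intro u v a h hor
    obtain ⟨p, q, l, e, hp, hq⟩ := hends u v h
    rw [e] at hor
    rcases hor with hor | hor
    · simp only [List.head?_cons, Option.some.injEq] at hor
      exact ⟨u, Or.inl rfl, (hin u a).1 (hor ▸ hp)⟩
    · rw [← List.cons_append, List.getLast?_concat, Option.some.injEq] at hor
      exact ⟨v, Or.inr rfl, (hin v a).1 (hor ▸ hq)⟩
  -- the new chains
  have hEP : ∀ u v, G.Adj u v → ∃ m, EP f (D.chain u v) (pos u :: (m ++ [pos v])) := by
    intro u v h
    obtain ⟨p, q, l, e, hp, hq⟩ := hends u v h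
    have hpi := hint p (hcorner u v h p (by rw [e]; simp))
    have hqi := hint q (hcorner u v h q (by rw [e]; simp))
    obtain ⟨a, rfl⟩ := hpi.exists_toPt
    obtain ⟨b, rfl⟩ := hqi.exists_toPt
    have hinj : ∀ a b, toPt a ∈ chainSet (D.chain u v) → toPt b ∈ chainSet (D.chain u v) →
        f a = f b → a = b := by
      intro a b ha hb hab
      rcases collapse_cases hX hd hab with hab | ⟨w, hwa, hwb⟩
      · exact hab
      · have h1 := hbox u v w h ⟨ha, (hin w a).2 hwa⟩
        have h2 := hbox u v w h ⟨hb, (hin w b).2 hwb⟩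
        have huv := h.ne
        simp only [Set.mem_ofPred_eq] at h1 h2
        rcases h1 with ⟨h1, h1'⟩ | ⟨h1, h1'⟩ <;> rcases h2 with ⟨h2, h2'⟩ | ⟨h2, h2'⟩
        · rw [h1'] at h2'; exact toPt_inj (Option.some.inj h2')
        · exact absurd (h1.symm.trans h2) huv
        · exact absurd (h2.symm.trans h1) huv
        · rw [h1'] at h2'; exact toPt_inj (Option.some.inj h2')
    obtain ⟨m, hm⟩ := exists_EP hf (hch u v h).1 (hch u v h).2.1
      (fun p hp => hint p (hcorner u v h p hp)) hinj (a := a) (b := b)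
      (by rw [e]; simp) (by rw [e, ← List.cons_append, List.getLast?_concat])
    rw [hpos u a ((hin u a).1 hp), hpos v b ((hin v b).1 hq)] at hm
    exact ⟨m, hm⟩
  classical
  let em : V → V → List Pt := fun u v => if h : G.Adj u v then (hEP u v h).choose else []
  have hem : ∀ u v, G.Adj u v → EP f (D.chain u v) (pos u :: (em u v ++ [pos v])) := by
    intro u v h
    have := (hEP u v h).choose_spec
    simp only [em, dif_pos h]
    exact this
  let r := Fintype.equivFin V
  let bends : V → V → List Pt := fun u v =>
    if r u < r v then em u v else if r v < r u then (em v u).reverse else []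
  have hsymm : ∀ u v, bends v u = (bends u v).reverse := by
    intro u v
    simp only [bends]
    rcases lt_trichotomy (r u) (r v) with h | h | h
    · rw [if_neg (not_lt.2 h.le), if_pos h, if_pos h]
    · simp [h]
    · rw [if_pos h, if_neg (not_lt.2 h.le), if_pos h, List.reverse_reverse]
  let D' : PolylineDrawing G := ⟨pos, bends, hsymm⟩
  have hE : ∀ u v, G.Adj u v → EP f (D.chain u v) (D'.chain u v) := by
    intro u v h
    show EP f (D.chain u v) (pos u :: (bends u v ++ [pos v]))
    rcases lt_trichotomy (r u) (r v) with hr | hr | hr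
    · simp only [bends, if_pos hr]
      exact hem u v h
    · exact absurd (r.injective hr) h.ne
    · simp only [bends, if_neg (not_lt.2 hr.le), if_pos hr]
      have := (hem v u h.symm).reverse (hlen v u h.symm)
      rw [← D.chain_symm] at this
      simpa using this
  -- two curve points with the same image
  have hmeet : ∀ u v x y c c', G.Adj u v → G.Adj x y → s(u, v) ≠ s(x, y) →
      toPt c ∈ D.curve u v → toPt c' ∈ D.curve x y → f c = f c' →
      ∃ w, (w = u ∨ w = v) ∧ (w = x ∨ w = y) ∧ toPt (f c) = pos w := by
    intro u v x y c c' h h' hne hc hc' he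
    rcases collapse_cases hX hd he with rfl | ⟨w, hw, hw'⟩
    · obtain ⟨h1, h2⟩ := hcross u v x y h h' hne ⟨hc, hc'⟩
      obtain ⟨w, hw, hwc⟩ := hendbox u v c h h1
      obtain ⟨w', hw', hwc'⟩ := hendbox x y c h' h2
      obtain rfl := hd w w' c hwc hwc'
      exact ⟨w, hw, hw', hpos w c hwc⟩
    · exact ⟨w, hcb u v w c h hc hw, hcb x y w c' h' hc' hw', hpos w c hw⟩
  have hcorn : ∀ u v, G.Adj u v → ∀ p ∈ D'.chain u v, p ∈ D'.points := by
    intro u v h p hp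
    have hp' : p = pos u ∨ p ∈ bends u v ∨ p = pos v := by
      have : p ∈ pos u :: (bends u v ++ [pos v]) := hp
      simpa using this
    rcases hp' with rfl | hp | rfl
    · exact Or.inl ⟨u, rfl⟩
    · refine Or.inr ?_
      simp only [Set.mem_iUnion]
      exact ⟨u, v, h, hp⟩
    · exact Or.inl ⟨v, rfl⟩
  have hpts : ∀ p ∈ D'.points, ∃ a, p = toPt (f a) ∧
      ((∃ v, a = (X1 v, Y v)) ∨ ∃ u v, G.Adj u v ∧ toPt a ∈ D.curve u v) := by
    rintro p (⟨v, rfl⟩ | hp)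
    · exact ⟨(X1 v, Y v), (hpos v _ (hself v)).symm, Or.inl ⟨v, rfl⟩⟩
    · simp only [Set.mem_iUnion] at hp
      obtain ⟨u, v, h, hp⟩ := hp
      have hp' : p ∈ D'.chain u v := by
        show p ∈ pos u :: (bends u v ++ [pos v])
        have : p ∈ bends u v := hp
        simp [this]
      obtain ⟨a, e, ha⟩ := (hE u v h).corners p hp'
      exact ⟨a, e, Or.inr ⟨u, v, h, ha⟩⟩
  have hboxpt : ∀ v, ((X1 v : ℝ), (Y v : ℝ)) ∈ D.points := by
    intro v
    refine Or.inl (Set.mem_iUnion.2 ⟨v, ?_⟩)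
    rw [hX1, hY]; simp
  have hcurve : ∀ u v, G.Adj u v → ∀ S : Set Pt, Convex ℝ S → D.points ⊆ S → D.curve u v ⊆ S := by
    intro u v h S hS hsub
    show chainSet _ ⊆ S
    rw [chainSet_eq_rcs _ (hlen u v h)]
    exact rcs_subset_convex hS _ (fun p hp => hsub (hcorner u v h p hp))
  have hcurve' : ∀ u v, G.Adj u v → ∀ S : Set Pt, Convex ℝ S → D'.points ⊆ S →
      chainSet (D'.chain u v) ⊆ S := by
    intro u v h S hS hsub
    rw [chainSet_eq_rcs _ (hE u v h).simple.1]
    exact rcs_subset_convex hS _ (fun p hp => hsub (hcorn u v h p hp))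
  refine ⟨D', ⟨hposinj, fun u v h => ⟨(hE u v h).simple, (hE u v h).genuine⟩, ?_, ?_⟩,
    ?_, ?_, ?_, ?_, ?_, ?_⟩
  · -- curves avoid other vertices
    intro u v w h hwu hwv hw
    obtain ⟨c, d, hN, hz, hc, hd'⟩ := (hE u v h).steps _ hw
    have hfin : ∀ p, toPt p ∈ D.curve u v → f p ≠ f (X1 w, Y w) := by
      intro p hp he
      have : InB X1 X2 Y w p := by
        rcases collapse_cases hX hd he with rfl | ⟨w', h1, h2⟩
        · exact hself w
        · rwa [hd w w' _ (hself w) h2]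
      rcases hcb u v w p h hp this with e | e
      · exact hwu e
      · exact hwv e
    have hz' : pos w ∈ segment ℝ (toPt (f (X1 w, Y w))) (toPt (f (X1 w, Y w))) := by
      rw [hpos w _ (hself w)]; exact left_mem_segment ℝ _ _
    rcases key hf hN (Nbr.refl (X1 w, Y w)) hz hz' with ⟨p, q, hp, hq, e1, e2⟩ | e | e
    · have he : f p = f q := toPt_inj (e1.symm.trans e2)
      obtain rfl : q = (X1 w, Y w) := hq.elim id id
      rcases hp with rfl | rfl
      · exact hfin _ hc he
      · exact hfin _ hd' he
    · exact hfin _ hc e.1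
    · exact hfin _ hc e.1
  · -- curves cross only in common end vertices
    rintro u v x y h h' hne z ⟨hz, hz'⟩
    obtain ⟨a, b, hN, hs, ha, hb⟩ := (hE u v h).steps z hz
    obtain ⟨c, d, hN', hs', hc, hd'⟩ := (hE x y h').steps z hz'
    have fin1 : ∀ p q, toPt p ∈ D.curve u v → toPt q ∈ D.curve x y → z = toPt (f p) →
        z = toPt (f q) → z ∈ D'.pos '' (({u, v} : Set V) ∩ ({x, y} : Set V)) := by
      intro p q hp hq e1 e2
      obtain ⟨w, h1, h2, h3⟩ := hmeet u v x y p q h h' hne hp hq (toPt_inj (e1.symm.trans e2))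
      exact ⟨w, ⟨by simpa using h1, by simpa using h2⟩, (e1.trans h3).symm⟩
    have fin2 : ∀ p q, toPt p ∈ D.curve x y → toPt q ∈ D.curve x y → f a = f p → f b = f q →
        z ∈ D'.pos '' (({u, v} : Set V) ∩ ({x, y} : Set V)) := by
      intro p q hp hq e1 e2
      by_cases hab : f a = f b
      · have hza : z = toPt (f a) := by
          rw [← hab, segment_same] at hs
          exact hs
        exact fin1 a p ha hp hza (e1 ▸ hza)
      · exfalso
        obtain ⟨w, h1, h2, h3⟩ := hmeet u v x y a p h h' hne ha hp e1
        obtain ⟨w', h1', h2', h3'⟩ := hmeet u v x y b q h h' hne hb hq e2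
        have hww : w ≠ w' := by
          rintro rfl
          exact hab (toPt_inj (h3.trans h3'.symm))
        apply hne
        rw [Sym2.eq_iff]
        clear * - h1 h2 h1' h2' hww
        grind
    rcases key hf hN hN' hs hs' with ⟨p, q, hp, hq, e1, e2⟩ | e | e
    · refine fin1 p q ?_ ?_ e1 e2
      · rcases hp with rfl | rfl
        · exact ha
        · exact hb
      · rcases hq with rfl | rfl
        · exact hc
        · exact hd'
    · exact fin2 c d hc hd' e.1 e.2
    · exact fin2 d c hd' hc e.1 e.2
  · -- integrality
    intro p hp
    obtain ⟨a, rfl, -⟩ := hpts p hp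
    exact ⟨⟨_, rfl⟩, ⟨_, rfl⟩⟩
  · intro v
    rw [hY]
    rfl
  · intro v w _ hlt
    have h1 := (D.box v).hx
    rw [hX1 v] at h1
    rw [hX1 w] at hlt
    exact lt_of_le_of_lt h1 hlt
  · -- width
    rintro w ⟨x0, hw⟩
    refine ⟨x0, fun p hp => ?_⟩
    obtain ⟨a, rfl, ha⟩ := hpts p hp
    by_cases hb : ∃ v, InB X1 X2 Y v a
    · obtain ⟨v, hv⟩ := hb
      rw [hpos v a hv]
      exact hw _ (hboxpt v)
    · rcases ha with ⟨v, rfl⟩ | ⟨u, v, h, ha⟩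
      · exact absurd ⟨v, hself v⟩ hb
      · rw [hfdef, collapse_out hb]
        exact hcurve u v h _ (convex_xstrip _ _) hw ha
  · intro hm u v h
    exact (hE u v h).mono (hm u v h)
  · intro ht
    constructor
    · rintro ⟨y0, hw⟩
      refine ⟨y0, fun p hp => ?_⟩
      obtain ⟨a, rfl, ha⟩ := hpts p hp
      have e : (toPt (f a)).2 = (toPt a).2 := by simp only [toPt, hf.row]
      rw [e]
      rcases ha with ⟨v, rfl⟩ | ⟨u, v, h, ha⟩
      · exact hw _ (hboxpt v)
      · exact hcurve u v h _ (convex_ystrip _ _) hw ha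
    · rintro ⟨y0, hw⟩
      refine ⟨y0, fun p hp => ?_⟩
      rcases hp with hp | hp
      · simp only [Set.mem_iUnion] at hp
        obtain ⟨v, hp⟩ := hp
        have e : p.2 = (pos v).2 := by
          simp only [Set.mem_insert_iff, Set.mem_singleton_iff] at hp
          rcases hp with rfl | rfl | rfl | rfl <;> simp [hY, hY2, pos, toPt]
        rw [e]
        exact hw _ (Or.inl ⟨v, rfl⟩)
      · simp only [Set.mem_iUnion] at hp
        obtain ⟨u, v, h, hp⟩ := hp
        obtain ⟨z, hz, e⟩ := (hE u v h).back p hp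
        rw [← e]
        exact hcurve' u v h _ (convex_ystrip _ _) hw hz
end
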